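/- arXiv:1610.01850 — 3 statements merged into one kernel-verified Lean document; each statement's English description precedes it below -/
import Mathlib

section
/- Let Y_n ⊂ ℝ² be a Π_n-poised set, k ∈ Π of exact degree 1 with zero set K = V(k) satisfying Y_n ∩ K = ∅, and let T ⊂ K be a set of n + 2 distinct points, Y_{n+1} = Y_n ∪ T. Then the polynomials h_t := ℓ_{t,Y_{n+1}} ∈ Π_{n+1} ∩ I(Y_n), t ∈ T, are ℝ[k]-independent — that is, whenever Σ_{t∈T} c_t(k) h_t = 0 for univariate real polynomials c_t, then c_t = 0 for every t ∈ T — and they form an H-basis of the ideal I(Y_n). -/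
open MvPolynomial

noncomputable section

abbrev Pt : Type := Fin 2 → ℝ
abbrev BPoly : Type := MvPolynomial (Fin 2) ℝ

/-- `Π_n`: the space of bivariate polynomials of total degree at most `n`. -/
def PiLE (n : ℕ) : Submodule ℝ BPoly := MvPolynomial.restrictTotalDegree (Fin 2) ℝ n

/-- The vanishing ideal `I(Y)` of a set `Y ⊆ ℝ²`. -/
def vIdeal (Y : Set Pt) : Ideal BPoly where
  carrier := {p | ∀ y ∈ Y, eval y p = 0}
  add_mem' := by
    intro a b ha hb y hy
    simp [map_add, ha y hy, hb y hy]
  zero_mem' := by intro y hy; simp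
  smul_mem' := by
    intro c a ha y hy
    simp [smul_eq_mul, ha y hy]

/-- `I(Y)` as an `ℝ`-subspace of `Π`. -/
def vSub (Y : Set Pt) : Submodule ℝ BPoly := (vIdeal Y).restrictScalars ℝ

/-- `Y` is `Π_n`-poised: every interpolation problem on `Y` has a unique solution in `Π_n`. -/
def Poised (n : ℕ) (Y : Finset Pt) : Prop :=
  ∀ f : Pt → ℝ, ∃! p : BPoly, p ∈ PiLE n ∧ ∀ y ∈ Y, eval y p = f y

/-- `Y` is `Π_n`-independent: every interpolation problem on `Y` has a solution in `Π_n`. -/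
def PIndep (n : ℕ) (Y : Finset Pt) : Prop :=
  ∀ f : Pt → ℝ, ∃ p ∈ PiLE n, ∀ y ∈ Y, eval y p = f y

/-- `ℓ y` is the fundamental (Lagrange) polynomial of `y ∈ Y` in `Π_n`. -/
def IsFundamental (n : ℕ) (Y : Finset Pt) (ℓ : Pt → BPoly) : Prop :=
  ∀ y ∈ Y, ℓ y ∈ PiLE n ∧ ∀ y' ∈ Y, eval y' (ℓ y) = if y' = y then 1 else 0

/-- A finite family is an H-basis of the ideal `I`. -/
def IsHBasisFam {ι : Type} [Fintype ι] (I : Ideal BPoly) (h : ι → BPoly) : Prop :=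
  (∀ i, h i ∈ I) ∧ ∀ f ∈ I, ∃ g : ι → BPoly,
    (∀ i, (g i).totalDegree ≤ f.totalDegree - (h i).totalDegree) ∧ f = ∑ i, g i * h i

/-- A finite set is an H-basis of the ideal `I`. -/
def IsHBasisSet (I : Ideal BPoly) (H : Finset BPoly) : Prop :=
  (∀ p ∈ H, p ∈ I) ∧ ∀ f ∈ I, ∃ g : BPoly → BPoly,
    (∀ p ∈ H, (g p).totalDegree ≤ f.totalDegree - p.totalDegree) ∧ f = ∑ p ∈ H, g p * p

/-- `M` is a linear syzygy matrix for the family `h`. -/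
def IsLinSyz (n : ℕ) (h : Fin (n + 2) → BPoly)
    (M : Matrix (Fin (n + 1)) (Fin (n + 2)) BPoly) : Prop :=
  (∀ i j, M i j ∈ PiLE 1) ∧ ∀ i, ∑ j, M i j * h j = 0

/-- The rank of a polynomial matrix over the field of rational functions. -/
def ratRank {a b : ℕ} (M : Matrix (Fin a) (Fin b) BPoly) : ℕ :=
  (M.map (algebraMap BPoly (FractionRing BPoly))).rank

/-!
Modulo `k`, the coordinate ring of the plane is a univariate polynomial ring in an affine
coordinate `l` of the line `K`, and there the `h_t` become the Lagrange basis of the `n + 2` nodes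
`l(t)`. Hence every `f ∈ I(Y_n)` of degree at most `n + 1 + d` can be written as
`f = ∑ g_t h_t + k q` with `deg g_t ≤ d` and `deg q ≤ n + d`. As `k` has no zero on `Y_n`, the
quotient `q` is again in `I(Y_n)`, so the division can be repeated; it stops at `deg q ≤ n`, where
poisedness forces `q = 0`. For independence, evaluating `∑ c_t(k) h_t = 0` on `T` gives
`c_t(0) = 0`, after which a factor `k` cancels.
-/

open scoped Polynomial

section Independence

variable {R A B ι : Type*} [CommRing R] [CommRing A] [Algebra R A] [CommRing B] [Algebra R B]
  [Fintype ι]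

lemma coeff_zero_eq_zero_of_sum_aeval_mul_eq_zero {φ : A →ₐ[R] B} {k : A} (hφk : φ k = 0)
    {h : ι → A} (hφh : LinearIndependent R (φ ∘ h)) {c : ι → R[X]}
    (hc : ∑ i, Polynomial.aeval k (c i) * h i = 0) (i : ι) : (c i).coeff 0 = 0 := by
  refine Fintype.linearIndependent_iff.mp hφh (fun i => (c i).coeff 0) ?_ i
  have hφaeval (u : R[X]) : φ (Polynomial.aeval k u) = algebraMap R B (u.coeff 0) := by
    rw [← Polynomial.aeval_algHom_apply, hφk, Polynomial.coeff_zero_eq_aeval_zero']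
  simpa only [map_sum, map_mul, map_zero, hφaeval, ← Algebra.smul_def, Function.comp_apply]
    using congrArg φ hc

lemma eq_zero_of_sum_aeval_mul_eq_zero {φ : A →ₐ[R] B} {k : A} (hk : IsLeftRegular k)
    (hφk : φ k = 0) {h : ι → A} (hφh : LinearIndependent R (φ ∘ h)) {c : ι → R[X]}
    (hc : ∑ i, Polynomial.aeval k (c i) * h i = 0) (i : ι) : c i = 0 := by
  ext j
  rw [Polynomial.coeff_zero]
  induction j generalizing c with
  | zero => exact coeff_zero_eq_zero_of_sum_aeval_mul_eq_zero hφk hφh hc i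
  | succ j ih =>
    rw [← Polynomial.coeff_divX]
    refine ih (c := fun i => (c i).divX) (hk ?_)
    have aeval_eq (i : ι) : Polynomial.aeval k (c i) = k * Polynomial.aeval k (c i).divX := by
      conv_lhs => rw [← Polynomial.X_mul_divX_add (c i),
        coeff_zero_eq_zero_of_sum_aeval_mul_eq_zero hφk hφh hc i]
      simp
    simpa only [aeval_eq, mul_assoc, ← Finset.mul_sum, mul_zero] using hc

end Independence

section LagrangeBasis

variable {F ι : Type*} [Field F] [DecidableEq ι] {s : Finset ι} {z : ι → F}

lemma eq_lagrangeBasis (hz : Set.InjOn z s) {i : ι} (hi : i ∈ s) {u : F[X]}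
    (hdeg : u.natDegree < s.card) (heval : ∀ j ∈ s, u.eval (z j) = if j = i then 1 else 0) :
    u = Lagrange.basis s z i := by
  rw [Lagrange.eq_interpolate_of_eval_eq _ hz
    (Polynomial.degree_le_natDegree.trans_lt (mod_cast hdeg)) heval, Lagrange.interpolate_apply]
  simp [hi]

/- Writing `u = X ^ d * q + r` with `deg q < #s`, expand `q` by Lagrange interpolation and `r` as
`r * 1`, since the Lagrange basis sums to `1`. -/
lemma exists_eq_sum_mul_lagrangeBasis (hz : Set.InjOn z s) (hs : s.Nonempty) {d : ℕ} {u : F[X]}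
    (hu : u.natDegree < s.card + d) :
    ∃ a : ι → F[X], (∀ i, (a i).natDegree ≤ d) ∧ u = ∑ i ∈ s, a i * Lagrange.basis s z i := by
  have hmonic : (Polynomial.X ^ d : F[X]).Monic := Polynomial.monic_X_pow d
  set q := u /ₘ Polynomial.X ^ d
  set r := u %ₘ Polynomial.X ^ d
  have hq : q.natDegree < s.card := by
    rw [Polynomial.natDegree_divByMonic _ hmonic, Polynomial.natDegree_X_pow]
    have := hs.card_pos
    omega
  have hr : r.natDegree ≤ d := by
    simpa only [Polynomial.natDegree_X_pow] using Polynomial.natDegree_modByMonic_le u hmonic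
  refine ⟨fun i => r + Polynomial.X ^ d * Polynomial.C (q.eval (z i)), fun i => ?_, ?_⟩
  · exact Polynomial.natDegree_add_le_of_degree_le hr <|
      (Polynomial.natDegree_mul_C_le _ _).trans (Polynomial.natDegree_X_pow d).le
  · calc u = r * 1 + Polynomial.X ^ d * q := by
          rw [mul_one, Polynomial.modByMonic_add_div]
      _ = r * ∑ i ∈ s, Lagrange.basis s z i + Polynomial.X ^ d *
            ∑ i ∈ s, Polynomial.C (q.eval (z i)) * Lagrange.basis s z i := by
          rw [Lagrange.sum_basis hz hs, ← Lagrange.interpolate_apply, ← Lagrange.eq_interpolate hz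
            (Polynomial.degree_le_natDegree.trans_lt (mod_cast hq))]
      _ = _ := by
          simp only [Finset.mul_sum, add_mul, Finset.sum_add_distrib, mul_assoc]

end LagrangeBasis

section Substitution

variable {R σ : Type*} [CommSemiring R]

lemma totalDegree_aeval_le (l : MvPolynomial σ R) (u : R[X]) :
    (Polynomial.aeval l u).totalDegree ≤ u.natDegree * l.totalDegree := by
  rw [Polynomial.aeval_eq_sum_range]
  refine totalDegree_finsetSum_le fun i hi => ?_
  calc (u.coeff i • l ^ i).totalDegree ≤ (l ^ i).totalDegree := totalDegree_smul_le _ _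
    _ ≤ i * l.totalDegree := totalDegree_pow _ _
    _ ≤ u.natDegree * l.totalDegree := by
      gcongr
      exact Finset.mem_range_succ_iff.mp hi

lemma eval_polynomial_aeval (x : σ → R) (l : MvPolynomial σ R) (u : R[X]) :
    eval x (Polynomial.aeval l u) = u.eval (eval x l) := by
  rw [← coe_aeval_eq_eval, ← Polynomial.coe_aeval_eq_eval]
  exact (Polynomial.aeval_algHom_apply (aeval x) l u).symm

lemma eq_C_add_sum_of_totalDegree_le_one [Fintype σ] {p : MvPolynomial σ R}
    (hp : p.totalDegree ≤ 1) :
    p = C (coeff 0 p) + ∑ i, C (coeff (Finsupp.single i 1) p) * X i := by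
  classical
  ext m
  simp only [coeff_add, coeff_C, coeff_sum, coeff_C_mul, coeff_X]
  rcases lt_trichotomy m.degree 1 with hm | hm | hm
  · obtain rfl : m = 0 := m.degree_eq_zero_iff.mp (Nat.lt_one_iff.mp hm)
    simp
  · obtain ⟨j, rfl⟩ : m ∈ Set.range fun j => Finsupp.single j 1 := by
      rwa [Finsupp.range_single_one]
    simp [Finsupp.single_left_inj, eq_comm (a := (0 : σ →₀ ℕ))]
  · have ne_zero : 0 ≠ m := by rintro rfl; simp at hm
    have ne_single (i : σ) : Finsupp.single i 1 ≠ m := by rintro rfl; simp at hm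
    rw [coeff_eq_zero_of_totalDegree_lt (hp.trans_lt hm)]
    simp [ne_zero, ne_single]

end Substitution

section LineCoordinate

variable {R σ : Type*} [CommRing R] {k l : MvPolynomial σ R}

lemma dvd_sub_aeval_aeval {w : σ → R[X]}
    (hw : ∀ i, k ∣ X i - Polynomial.aeval l (w i)) (p : MvPolynomial σ R) :
    k ∣ p - Polynomial.aeval l (aeval w p) := by
  let π := Ideal.Quotient.mkₐ R (Ideal.span {k})
  have π_eq_iff (p q : MvPolynomial σ R) : π p = π q ↔ k ∣ p - q :=
    Ideal.Quotient.mk_eq_mk_iff_sub_mem p q |>.trans Ideal.mem_span_singleton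
  have π_eq : π = π.comp ((Polynomial.aeval l).comp (aeval w)) :=
    algHom_ext fun i => by
      simpa only [AlgHom.comp_apply, aeval_X] using (π_eq_iff _ _).mpr (hw i)
  exact (π_eq_iff _ _).mp (DFunLike.congr_fun π_eq p)

lemma eval_eq_of_dvd_sub_aeval {x : σ → R} (hx : eval x k = 0) {p : MvPolynomial σ R} {u : R[X]}
    (hu : k ∣ p - Polynomial.aeval l u) : eval x p = u.eval (eval x l) := by
  rw [← eval_polynomial_aeval, ← sub_eq_zero, ← map_sub, ← zero_dvd_iff, ← hx]
  exact map_dvd (eval x) hu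

/-- `l` is an affine coordinate on the line `k = 0`: it has degree at most one and, modulo `k`,
every variable is an affine function of `l`. -/
def IsLineCoordinate (k l : MvPolynomial σ R) : Prop :=
  l.totalDegree ≤ 1 ∧
    ∀ i, ∃ w : R[X], w.natDegree ≤ 1 ∧ k ∣ X i - Polynomial.aeval l w

namespace IsLineCoordinate

lemma exists_dvd_sub_aeval (hl : IsLineCoordinate k l) (p : MvPolynomial σ R) :
    ∃ u : R[X], u.natDegree ≤ p.totalDegree ∧ k ∣ p - Polynomial.aeval l u := by
  choose w hw_deg hw_dvd using hl.2
  refine ⟨aeval w p, ?_, dvd_sub_aeval_aeval hw_dvd p⟩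
  simpa only [mul_one] using aeval_natDegree_le p le_rfl w hw_deg

lemma injOn_eval (hl : IsLineCoordinate k l) :
    Set.InjOn (fun x => eval x l) {x | eval x k = 0} := by
  intro x hx y hy hxy
  funext i
  obtain ⟨w, -, hw⟩ := hl.2 i
  have hxi := eval_eq_of_dvd_sub_aeval hx hw
  have hyi := eval_eq_of_dvd_sub_aeval hy hw
  rw [eval_X] at hxi hyi
  rw [hxi, hyi]
  exact congrArg (Polynomial.eval · w) hxy

end IsLineCoordinate

variable {F : Type*} [Field F]

lemma isLineCoordinate_X {i j : σ} (hσ : ∀ m, m = i ∨ m = j) {a : F} (ha : a ≠ 0) (b c : F) :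
    IsLineCoordinate (C c + (C a * X i + C b * X j)) (X j) := by
  refine ⟨(totalDegree_X j).le, fun m => ?_⟩
  rcases hσ m with rfl | rfl
  · refine ⟨Polynomial.C (-(a⁻¹ * b)) * Polynomial.X + Polynomial.C (-(a⁻¹ * c)),
      Polynomial.natDegree_linear_le, C a⁻¹, ?_⟩
    have hC : (C a * C a⁻¹ : MvPolynomial σ F) = 1 := by rw [← C_mul, mul_inv_cancel₀ ha, C_1]
    simp only [map_add, map_mul, map_neg, Polynomial.aeval_X, Polynomial.aeval_C, algebraMap_eq]
    linear_combination -X m * hC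
  · exact ⟨Polynomial.X, Polynomial.natDegree_X_le, by simp⟩

lemma exists_isLineCoordinate {k : MvPolynomial (Fin 2) F} (hk : k.totalDegree = 1) :
    ∃ l, IsLineCoordinate k l := by
  have k_eq := eq_C_add_sum_of_totalDegree_le_one hk.le
  rw [Fin.sum_univ_two] at k_eq
  set a := coeff (Finsupp.single 0 1) k
  set b := coeff (Finsupp.single 1 1) k
  by_cases ha : a = 0
  · have hb : b ≠ 0 := by
      intro hb
      rw [k_eq, ha, hb] at hk
      simp at hk
    rw [k_eq, add_comm (C a * X 0)]
    exact ⟨X 0, isLineCoordinate_X (by decide) hb _ _⟩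
  · rw [k_eq]
    exact ⟨X 1, isLineCoordinate_X (by decide) ha _ _⟩

end LineCoordinate

section DualFamily

variable {R σ ι : Type*} [CommRing R] [DecidableEq ι] {x : ι → σ → R}
  {h : ι → MvPolynomial σ R}

lemma injective_of_eval_eq_ite [Nontrivial R]
    (hδ : ∀ i j, eval (x j) (h i) = if j = i then 1 else 0) :
    Function.Injective x := by
  intro i j hij
  by_contra hne
  have hone := hδ i i
  rw [hij, hδ i j] at hone
  simp [Ne.symm hne] at hone

lemma eq_zero_of_sum_aeval_mul_eq_zero_of_eval_eq_ite [IsDomain R] [Fintype ι]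
    {k : MvPolynomial σ R} (hk : k ≠ 0) (hx : ∀ i, eval (x i) k = 0)
    (hδ : ∀ i j, eval (x j) (h i) = if j = i then 1 else 0) {c : ι → R[X]}
    (hc : ∑ i, Polynomial.aeval k (c i) * h i = 0) (i : ι) : c i = 0 := by
  let evalNodes : MvPolynomial σ R →ₐ[R] ι → R := AlgHom.pi fun j => aeval (x j)
  have evalNodes_apply (p : MvPolynomial σ R) (j : ι) : evalNodes p j = eval (x j) p := rfl
  have evalNodes_h : evalNodes ∘ h = fun i => Pi.single i 1 := by
    funext i j
    rw [Function.comp_apply, evalNodes_apply, hδ, Pi.single_apply]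
  refine eq_zero_of_sum_aeval_mul_eq_zero (φ := evalNodes) (IsRegular.of_ne_zero hk).left
    (funext hx) ?_ hc i
  rw [evalNodes_h]
  exact Pi.linearIndependent_single_one ι R

end DualFamily

section BerzolariRadon

variable {F σ ι : Type*} [Field F] [Fintype ι] [DecidableEq ι] {k l : MvPolynomial σ F}
  {x : ι → σ → F} {h : ι → MvPolynomial σ F}

namespace IsLineCoordinate

lemma exists_dvd_sub_sum_mul [Nonempty ι] (hl : IsLineCoordinate k l)
    (hx : ∀ i, eval (x i) k = 0) (hdeg : ∀ i, (h i).totalDegree < Fintype.card ι)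
    (hδ : ∀ i j, eval (x j) (h i) = if j = i then 1 else 0) {d : ℕ} {f : MvPolynomial σ F}
    (hf : f.totalDegree < Fintype.card ι + d) :
    ∃ g : ι → MvPolynomial σ F, (∀ i, (g i).totalDegree ≤ d) ∧ k ∣ f - ∑ i, g i * h i := by
  choose v hv_deg hv_dvd using fun i => hl.exists_dvd_sub_aeval (h i)
  obtain ⟨u, hu_deg, hu_dvd⟩ := hl.exists_dvd_sub_aeval f
  let z (i : ι) : F := eval (x i) l
  have hz : Set.InjOn z (Finset.univ : Finset ι) := fun i _ j _ hij =>
    injective_of_eval_eq_ite hδ (hl.injOn_eval (hx i) (hx j) hij)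
  have v_eq (i : ι) : v i = Lagrange.basis Finset.univ z i :=
    eq_lagrangeBasis hz (Finset.mem_univ i) ((hv_deg i).trans_lt (hdeg i)) fun j _ =>
      (eval_eq_of_dvd_sub_aeval (hx j) (hv_dvd i)).symm.trans (hδ i j)
  obtain ⟨a, ha_deg, u_eq⟩ :=
    exists_eq_sum_mul_lagrangeBasis hz Finset.univ_nonempty (hu_deg.trans_lt hf)
  refine ⟨fun i => Polynomial.aeval l (a i), fun i => ?_, ?_⟩
  · calc _ ≤ (a i).natDegree * l.totalDegree := totalDegree_aeval_le _ _
      _ ≤ d * 1 := Nat.mul_le_mul (ha_deg i) hl.1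
      _ = d := mul_one d
  · have sub_eq : f - ∑ i, Polynomial.aeval l (a i) * h i = (f - Polynomial.aeval l u) -
        ∑ i, Polynomial.aeval l (a i) * (h i - Polynomial.aeval l (v i)) := by
      simp only [u_eq, v_eq, map_sum, map_mul, mul_sub, Finset.sum_sub_distrib]
      ring
    rw [sub_eq]
    exact dvd_sub hu_dvd (Finset.dvd_sum fun i _ => (hv_dvd i).mul_left _)

end IsLineCoordinate

variable {n : ℕ} {I : Ideal (MvPolynomial σ F)}

lemma exists_eq_sum_mul_add_mul (hl : IsLineCoordinate k l) (hk : k.totalDegree = 1)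
    (hkI : ∀ q, k * q ∈ I → q ∈ I) (hcard : n + 1 < Fintype.card ι)
    (hx : ∀ i, eval (x i) k = 0) (hdeg : ∀ i, (h i).totalDegree ≤ n + 1) (hhI : ∀ i, h i ∈ I)
    (hδ : ∀ i j, eval (x j) (h i) = if j = i then 1 else 0) {d : ℕ} {f : MvPolynomial σ F}
    (hfI : f ∈ I) (hf : f.totalDegree ≤ n + 1 + d) :
    ∃ (g : ι → MvPolynomial σ F) (q : MvPolynomial σ F), (∀ i, (g i).totalDegree ≤ d) ∧
      q ∈ I ∧ q.totalDegree ≤ n + d ∧ f = ∑ i, g i * h i + k * q := by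
  have : Nonempty ι := Fintype.card_pos_iff.mp (by omega)
  obtain ⟨g, hg, q, hq⟩ := hl.exists_dvd_sub_sum_mul hx (fun i => (hdeg i).trans_lt hcard) hδ
    (show f.totalDegree < Fintype.card ι + d by omega)
  refine ⟨g, q, hg, hkI q ?_, ?_, by rw [← hq]; ring⟩
  · rw [← hq]
    exact I.sub_mem hfI (I.sum_mem fun i _ => I.mul_mem_left _ (hhI i))
  · rcases eq_or_ne q 0 with rfl | hq0
    · simp
    have hk0 : k ≠ 0 := by rintro rfl; simp at hk
    have hsum : (∑ i, g i * h i).totalDegree ≤ n + 1 + d :=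
      totalDegree_finsetSum_le fun i _ => (totalDegree_mul _ _).trans <| by
        have := hg i
        have := hdeg i
        omega
    have hkq : (k * q).totalDegree ≤ n + 1 + d := hq ▸ (totalDegree_sub _ _).trans (max_le hf hsum)
    rw [totalDegree_mul_of_isDomain hk0 hq0] at hkq
    omega

lemma exists_eq_sum_mul (hl : IsLineCoordinate k l) (hk : k.totalDegree = 1)
    (hI : ∀ p ∈ I, p.totalDegree ≤ n → p = 0) (hkI : ∀ q, k * q ∈ I → q ∈ I)
    (hcard : n + 1 < Fintype.card ι) (hx : ∀ i, eval (x i) k = 0)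
    (hdeg : ∀ i, (h i).totalDegree ≤ n + 1) (hhI : ∀ i, h i ∈ I)
    (hδ : ∀ i j, eval (x j) (h i) = if j = i then 1 else 0) {d : ℕ} {f : MvPolynomial σ F}
    (hfI : f ∈ I) (hf : f.totalDegree ≤ n + 1 + d) :
    ∃ g : ι → MvPolynomial σ F, (∀ i, (g i).totalDegree ≤ d) ∧ f = ∑ i, g i * h i := by
  induction d generalizing f with
  | zero =>
    obtain ⟨g, q, hg, hqI, hq, f_eq⟩ :=
      exists_eq_sum_mul_add_mul hl hk hkI hcard hx hdeg hhI hδ hfI hf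
    exact ⟨g, hg, by rw [f_eq, hI q hqI hq, mul_zero, add_zero]⟩
  | succ d ih =>
    obtain ⟨g, q, hg, hqI, hq, f_eq⟩ :=
      exists_eq_sum_mul_add_mul hl hk hkI hcard hx hdeg hhI hδ hfI hf
    obtain ⟨g', hg', q_eq⟩ := ih hqI (by omega)
    refine ⟨fun i => g i + k * g' i, fun i => ?_, ?_⟩
    · refine (totalDegree_add _ _).trans (max_le (hg i) ((totalDegree_mul _ _).trans ?_))
      have := hg' i
      omega
    · simp only [f_eq, q_eq, Finset.mul_sum, add_mul, Finset.sum_add_distrib, mul_assoc]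

theorem stmt12_general {k : MvPolynomial (Fin 2) F} {x : ι → Fin 2 → F}
    {h : ι → MvPolynomial (Fin 2) F} {I : Ideal (MvPolynomial (Fin 2) F)}
    (hk : k.totalDegree = 1) (hI : ∀ p ∈ I, p.totalDegree ≤ n → p = 0)
    (hkI : ∀ q, k * q ∈ I → q ∈ I) (hcard : n + 1 < Fintype.card ι)
    (hx : ∀ i, eval (x i) k = 0) (hdeg : ∀ i, (h i).totalDegree ≤ n + 1) (hhI : ∀ i, h i ∈ I)
    (hδ : ∀ i j, eval (x j) (h i) = if j = i then 1 else 0) :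
    (∀ c : ι → F[X], ∑ i, Polynomial.aeval k (c i) * h i = 0 → ∀ i, c i = 0) ∧
    ∀ f ∈ I, ∃ g : ι → MvPolynomial (Fin 2) F,
      (∀ i, (g i).totalDegree ≤ f.totalDegree - (h i).totalDegree) ∧ f = ∑ i, g i * h i := by
  have hk0 : k ≠ 0 := by rintro rfl; simp at hk
  refine ⟨fun c hc => eq_zero_of_sum_aeval_mul_eq_zero_of_eval_eq_ite hk0 hx hδ hc,
    fun f hf => ?_⟩
  rcases le_or_gt f.totalDegree n with hfn | hfn
  · exact ⟨0, by simp, by simp [hI f hf hfn]⟩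
  obtain ⟨l, hl⟩ := exists_isLineCoordinate hk
  obtain ⟨g, hg, f_eq⟩ := exists_eq_sum_mul hl hk hI hkI hcard hx hdeg hhI hδ hf
    (d := f.totalDegree - (n + 1)) (by omega)
  exact ⟨g, fun i => (hg i).trans (Nat.sub_le_sub_left (hdeg i) _), f_eq⟩

end BerzolariRadon

lemma mem_piLE {n : ℕ} {p : BPoly} : p ∈ PiLE n ↔ p.totalDegree ≤ n :=
  mem_restrictTotalDegree _ _ _

lemma mem_vIdeal_of_mul_mem {Y : Set Pt} {k q : BPoly} (hk : ∀ y ∈ Y, eval y k ≠ 0)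
    (hkq : k * q ∈ vIdeal Y) : q ∈ vIdeal Y := fun y hy =>
  (mul_eq_zero.mp ((map_mul (eval y) k q).symm.trans (hkq y hy))).resolve_left (hk y hy)

lemma Poised.eq_zero_of_mem_vIdeal {n : ℕ} {Y : Finset Pt} (hY : Poised n Y) {p : BPoly}
    (hp : p ∈ vIdeal Y) (hdeg : p.totalDegree ≤ n) : p = 0 :=
  (hY 0).unique ⟨mem_piLE.mpr hdeg, hp⟩ ⟨Submodule.zero_mem _, fun y _ => map_zero (eval y)⟩

lemma IsFundamental.mem_vIdeal {n : ℕ} {Y Z : Finset Pt} {L : Pt → BPoly}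
    (hL : IsFundamental n Z L) (hYZ : Y ⊆ Z) {t : Pt} (ht : t ∈ Z) (htY : t ∉ Y) :
    L t ∈ vIdeal Y := fun y hy => by
  rw [(hL t ht).2 y (hYZ hy), if_neg (ne_of_mem_of_not_mem hy htY)]

/-- In the Berzolari–Radon construction, the polynomials
`h_t := ℓ_{t,Y_{n+1}}`, `t ∈ T`, lie in `Π_{n+1} ∩ I(Y_n)`, are
`ℝ[k]`-independent, and form an H-basis of the ideal `I(Y_n)`. -/
theorem stmt12 (n : ℕ) (Y T : Finset Pt) (k : BPoly) (hk : k.totalDegree = 1)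
    (hY : Poised n Y)
    (hYK : ∀ y ∈ Y, eval y k ≠ 0)
    (hT : ∀ t ∈ T, eval t k = 0)
    (hTcard : T.card = n + 2)
    (L : Pt → BPoly)
    (hL : IsFundamental (n + 1) (Y ∪ T) L) :
    (∀ t ∈ T, L t ∈ PiLE (n + 1) ⊓ vSub (Y : Set Pt)) ∧
    (∀ c : {x // x ∈ T} → Polynomial ℝ,
      (∑ t : {x // x ∈ T}, Polynomial.aeval k (c t) * L (t : Pt)) = 0 →
        ∀ t : {x // x ∈ T}, c t = 0) ∧
    IsHBasisFam (vIdeal (Y : Set Pt)) (fun t : {x // x ∈ T} => L (t : Pt)) := by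
  have hTZ : T ⊆ Y ∪ T := Finset.subset_union_right
  have hLI (t : T) : L t ∈ vIdeal Y :=
    hL.mem_vIdeal Finset.subset_union_left (hTZ t.2) fun htY => hYK t htY (hT t t.2)
  have hdeg (t : T) : (L t).totalDegree ≤ n + 1 := mem_piLE.mp (hL t (hTZ t.2)).1
  obtain ⟨hindep, hbasis⟩ := stmt12_general (x := ((↑) : T → Pt)) (h := fun t : T => L t)
    hk (fun _ => hY.eq_zero_of_mem_vIdeal) (fun _ => mem_vIdeal_of_mul_mem hYK)
    (by rw [Fintype.card_coe, hTcard]; exact Nat.lt_succ_self _) (fun t => hT t t.2) hdeg hLI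
    fun s t => by simpa only [Subtype.ext_iff] using (hL s (hTZ s.2)).2 t (hTZ t.2)
  exact ⟨fun t ht => ⟨mem_piLE.mpr (hdeg ⟨t, ht⟩), hLI ⟨t, ht⟩⟩, hindep, hLI, hbasis⟩
end
end

section
/- Let Y_n ⊂ ℝ² be a Π_n-poised set. Then for every H-basis (h_0, …, h_{n+1}) of I(Y_n) consisting of n + 2 elements there exists a linear syzygy matrix Σ(x) ∈ Π_1^{(n+1)×(n+2)} of rank n + 1, and any such syzygy matrix determines the H-basis up to a nonzero constant factor: there exists w ≠ 0 such that h_j(x) = (−1)^j · w · det Σ_j(x) for j = 0, …, n+1, where Σ_j(x) is the (n+1)×(n+1) submatrix obtained from Σ(x) by removing the column of index j. -/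
open MvPolynomial

noncomputable section

/-!
Only two features of `I = I(Y)` matter: `Π_n` is a complement of `I`, and the `n + 2` given elements
span `I ∩ Π_{n+1}`. Let `f_k ∈ I` be `x₁^{n+1-k} x₂^k` minus a polynomial of degree at most `n`;
these elements form a basis of `I ∩ Π_{n+1}`. The polynomial `x₂ f_k - x₁ f_{k+1}` again lies in
`I ∩ Π_{n+1}`, and expanding it in the `f_j` gives a linear syzygy. At `x₁ = 0` the first `n + 1`
columns of the resulting matrix form a characteristic matrix, so its rank is `n + 1`, and a constant
change of basis carries it from `f` to `h`.

Conversely, if `Σ` has rank `n + 1`, its kernel over the field of rational functions is a line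
containing both `h` and the vector of signed maximal minors. The `h_j` have no common factor,
because a common factor divides `f_0` and `f_{n+1}`, whose leading monomials `x₁^{n+1}` and
`x₂^{n+1}` are coprime. Hence the minors are a polynomial multiple of `h`, and by degree the
multiplier is constant.
-/

open scoped Matrix MonomialOrder

section SignedMinors

variable {R : Type*} [CommRing R] {m : ℕ}

/-- The maximal minors of an `m × (m + 1)` matrix with alternating signs, entry `j` being obtained
by removing column `j`: the generalized cross product of the rows. -/
def signedMinors (M : Matrix (Fin m) (Fin (m + 1)) R) : Fin (m + 1) → R :=
  fun j => (-1) ^ (j : ℕ) * (M.submatrix id j.succAbove).det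

theorem signedMinors_map {S : Type*} [CommRing S] (φ : R →+* S)
    (M : Matrix (Fin m) (Fin (m + 1)) R) : signedMinors (M.map φ) = φ ∘ signedMinors M := by
  ext j
  simp only [signedMinors, Function.comp_apply, map_mul, map_pow, map_neg, map_one,
    RingHom.map_det, RingHom.mapMatrix_apply, Matrix.submatrix_map]

theorem mulVec_signedMinors (M : Matrix (Fin m) (Fin (m + 1)) R) : M *ᵥ signedMinors M = 0 := by
  ext i
  let N : Matrix (Fin (m + 1)) (Fin (m + 1)) R := Matrix.of (Matrix.vecCons (M i) M)
  have det_repeated_row : N.det = 0 :=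
    Matrix.det_zero_of_row_eq (i := 0) (j := i.succ) (Fin.succ_ne_zero i).symm rfl
  rw [Pi.zero_apply, ← det_repeated_row, Matrix.det_succ_row_zero, Matrix.mulVec, dotProduct]
  refine Finset.sum_congr rfl fun j _ => ?_
  have minor_eq : N.submatrix Fin.succ j.succAbove = M.submatrix id j.succAbove := rfl
  have row_zero : N 0 j = M i j := rfl
  rw [minor_eq, row_zero, signedMinors]
  ring

theorem exists_smul_eq_of_mulVec_eq_zero {K : Type*} [Field K] {M : Matrix (Fin m) (Fin (m + 1)) K}
    (hM : M.rank = m) {u v : Fin (m + 1) → K} (hv : M *ᵥ v = 0) (hv0 : v ≠ 0)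
    (hu : M *ᵥ u = 0) : ∃ c : K, c • v = u := by
  have finrank_ker : Module.finrank K (LinearMap.ker M.mulVecLin) = 1 := by
    have rank_nullity := LinearMap.finrank_range_add_finrank_ker M.mulVecLin
    rw [← Matrix.rank, hM, Module.finrank_fin_fun] at rank_nullity
    lia
  obtain ⟨c, hc⟩ := (finrank_eq_one_iff_of_nonzero'
    (⟨v, hv⟩ : LinearMap.ker M.mulVecLin) (Subtype.coe_ne_coe.1 hv0)).1 finrank_ker ⟨u, hu⟩
  exact ⟨c, congrArg Subtype.val hc⟩

theorem signedMinors_apply_ne_zero {K : Type*} [Field K] {M : Matrix (Fin m) (Fin (m + 1)) K}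
    (hM : M.rank = m) {v : Fin (m + 1) → K} (hv : M *ᵥ v = 0) {j : Fin (m + 1)} (hvj : v j ≠ 0) :
    signedMinors M j ≠ 0 := by
  refine mul_ne_zero (pow_ne_zero _ (neg_ne_zero.2 one_ne_zero)) fun det_eq_zero => ?_
  obtain ⟨u, hu0, hu⟩ := Matrix.exists_mulVec_eq_zero_iff.2 det_eq_zero
  have insertNth_mem_ker : M *ᵥ j.insertNth 0 u = 0 := by
    ext i
    simpa [Matrix.mulVec, dotProduct, Fin.sum_univ_succAbove _ j] using congrFun hu i
  obtain ⟨c, hc⟩ := exists_smul_eq_of_mulVec_eq_zero hM hv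
    (fun hv0 => hvj (congrFun hv0 j)) insertNth_mem_ker
  have c_eq_zero : c = 0 := by simpa [hvj] using congrFun hc j
  refine hu0 (funext fun i => ?_)
  simpa [c_eq_zero] using (congrFun hc (j.succAbove i)).symm

variable [IsDomain R] [UniqueFactorizationMonoid R]

theorem exists_eq_smul_of_smul_algebraMap_eq {ι K : Type*} [Field K] [Algebra R K]
    [IsFractionRing R K] {h d : ι → R} (hprim : ∀ b, (∀ j, b ∣ h j) → IsUnit b) {c : K}
    (hc : c • (algebraMap R K ∘ h) = algebraMap R K ∘ d) : ∃ g : R, d = g • h := by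
  obtain ⟨a, b, hab, rfl⟩ := IsFractionRing.exists_reduced_fraction (A := R) c
  have cross_mul : ∀ j, a * h j = b * d j := fun j => by
    apply IsFractionRing.injective R K
    have hcj : IsLocalization.mk' K a b * algebraMap R K (h j) = algebraMap R K (d j) :=
      congrFun hc j
    rw [map_mul, map_mul, ← hcj, ← mul_assoc, IsLocalization.mk'_spec']
  obtain ⟨b', hb'⟩ := (hprim b fun j =>
    hab.symm.dvd_of_dvd_mul_left ⟨d j, cross_mul j⟩).exists_left_inv
  refine ⟨b' * a, funext fun j => ?_⟩
  rw [Pi.smul_apply, smul_eq_mul, mul_assoc, cross_mul, ← mul_assoc, hb', one_mul]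

theorem exists_signedMinors_eq_smul (K : Type*) [Field K] [Algebra R K] [IsFractionRing R K]
    {M : Matrix (Fin m) (Fin (m + 1)) R} (hM : (M.map (algebraMap R K)).rank = m)
    {h : Fin (m + 1) → R} (hMh : M *ᵥ h = 0) (hprim : ∀ b, (∀ j, b ∣ h j) → IsUnit b) :
    ∃ g : R, g ≠ 0 ∧ signedMinors M = g • h := by
  have map_mem_ker : ∀ u, M *ᵥ u = 0 → M.map (algebraMap R K) *ᵥ (algebraMap R K ∘ u) = 0 :=
    fun u hu => by
      ext i
      rw [← RingHom.map_mulVec, hu, Pi.zero_apply, map_zero, Pi.zero_apply]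
  obtain ⟨j, hj⟩ : ∃ j, h j ≠ 0 := by
    by_contra! h_eq_zero
    exact not_isUnit_zero (hprim 0 fun j => (h_eq_zero j).symm.dvd)
  have map_hj : (algebraMap R K ∘ h) j ≠ 0 :=
    (map_ne_zero_iff _ (IsFractionRing.injective R K)).2 hj
  obtain ⟨c, hc⟩ := exists_smul_eq_of_mulVec_eq_zero hM (map_mem_ker h hMh)
    (fun h0 => map_hj (congrFun h0 j)) (map_mem_ker _ (mulVec_signedMinors M))
  obtain ⟨g, hg⟩ := exists_eq_smul_of_smul_algebraMap_eq hprim hc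
  refine ⟨g, ?_, hg⟩
  rintro rfl
  apply signedMinors_apply_ne_zero hM (map_mem_ker h hMh) map_hj
  rw [signedMinors_map, Function.comp_apply, hg, zero_smul, Pi.zero_apply, map_zero]

end SignedMinors

section TotalDegree

variable {σ R : Type*} [CommRing R]

theorem totalDegree_det_le {ι : Type*} [Fintype ι] [DecidableEq ι] {d : ℕ}
    {N : Matrix ι ι (MvPolynomial σ R)} (hN : ∀ i j, (N i j).totalDegree ≤ d) :
    N.det.totalDegree ≤ Fintype.card ι * d := by
  rw [Matrix.det_apply]
  refine totalDegree_finsetSum_le fun τ _ => (totalDegree_smul_le _ _).trans ?_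
  calc (∏ i, N (τ i) i).totalDegree ≤ ∑ i, (N (τ i) i).totalDegree := totalDegree_finsetProd _ _
    _ ≤ ∑ _i : ι, d := Finset.sum_le_sum fun i _ => hN _ _
    _ = Fintype.card ι * d := by simp

theorem totalDegree_signedMinors_le {m d : ℕ}
    {M : Matrix (Fin m) (Fin (m + 1)) (MvPolynomial σ R)}
    (hM : ∀ i j, (M i j).totalDegree ≤ d) (j : Fin (m + 1)) :
    (signedMinors M j).totalDegree ≤ m * d := by
  have minor_le : (M.submatrix id j.succAbove).det.totalDegree ≤ m * d := by
    simpa using totalDegree_det_le (N := M.submatrix id j.succAbove)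
      fun i k => hM i (j.succAbove k)
  rcases neg_one_pow_eq_or (MvPolynomial σ R) (j : ℕ) with sign_eq | sign_eq <;>
    simpa [signedMinors, sign_eq] using minor_le

theorem lt_totalDegree_of_mem_of_disjoint {n : ℕ} {V : Submodule R (MvPolynomial σ R)}
    (hV : Disjoint V (restrictTotalDegree σ R n)) {p : MvPolynomial σ R} (hp : p ∈ V)
    (hp0 : p ≠ 0) : n < p.totalDegree := by
  by_contra! hdeg
  exact hp0 (Submodule.disjoint_def.1 hV p hp ((mem_restrictTotalDegree ..).2 hdeg))

theorem degLex_degree_eq_of_totalDegree_monomial_sub_lt [LinearOrder σ] [WellFoundedGT σ]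
    [Nontrivial R] {p : MvPolynomial σ R} {s : σ →₀ ℕ}
    (hp : (monomial s 1 - p).totalDegree < s.degree) : MonomialOrder.degLex.degree p = s := by
  classical
  have degree_monomial : MonomialOrder.degLex.degree (monomial s (1 : R)) = s := by
    rw [MonomialOrder.degree_monomial, if_neg one_ne_zero]
  have remainder_lt : MonomialOrder.degLex.degree (monomial s 1 - p) ≺[MonomialOrder.degLex]
      MonomialOrder.degLex.degree (monomial s (1 : R)) := by
    rw [degree_monomial, MonomialOrder.degLex_lt_iff, Finsupp.DegLex.lt_iff]
    exact Or.inl (by simpa [degree_degLexDegree] using hp)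
  rw [← sub_sub_cancel (monomial s 1) p, MonomialOrder.degree_sub_of_lt remainder_lt,
    degree_monomial]

end TotalDegree

section BinaryForms

/-- The exponent of `x₁^{d-k} x₂^k`; these enumerate the monomials of degree `d` in two
variables, where `x₁` is `X 0` and `x₂` is `X 1`. -/
def formExponent (d : ℕ) (k : Fin (d + 1)) : Fin 2 →₀ ℕ :=
  Finsupp.single 0 (d - (k : ℕ)) + Finsupp.single 1 (k : ℕ)

variable {d : ℕ}

theorem formExponent_apply_zero (k : Fin (d + 1)) : formExponent d k 0 = d - k := by
  simp [formExponent]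

theorem formExponent_apply_one (k : Fin (d + 1)) : formExponent d k 1 = k := by
  simp [formExponent]

theorem degree_formExponent (k : Fin (d + 1)) : (formExponent d k).degree = d := by
  rw [Finsupp.degree_eq_sum, Fin.sum_univ_two, formExponent_apply_zero, formExponent_apply_one]
  lia

theorem formExponent_injective : Function.Injective (formExponent d) := fun k l hkl => by
  simpa only [formExponent_apply_one, Fin.val_inj] using DFunLike.congr_fun hkl 1

theorem exists_formExponent_eq {s : Fin 2 →₀ ℕ} (hs : s.degree = d) :
    ∃ k, formExponent d k = s := by
  rw [Finsupp.degree_eq_sum, Fin.sum_univ_two] at hs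
  refine ⟨⟨s 1, by lia⟩, Finsupp.ext (Fin.forall_fin_two.2 ⟨?_, ?_⟩)⟩
  · rw [formExponent_apply_zero]
    exact Nat.sub_eq_of_eq_add hs.symm
  · exact formExponent_apply_one _

theorem single_one_add_formExponent_castSucc (k : Fin d) :
    Finsupp.single 1 1 + formExponent d k.castSucc =
      Finsupp.single 0 1 + formExponent d k.succ := by
  refine Finsupp.ext (Fin.forall_fin_two.2 ⟨?_, ?_⟩) <;>
    simp [formExponent_apply_zero, formExponent_apply_one] <;> lia

variable {R : Type*} [CommRing R]

theorem X_one_mul_monomial_formExponent_castSucc (k : Fin d) :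
    X 1 * monomial (formExponent d k.castSucc) (1 : R) =
      X 0 * monomial (formExponent d k.succ) 1 := by
  simp only [X, monomial_mul, single_one_add_formExponent_castSucc]

theorem totalDegree_sub_sum_monomial_formExponent_le {n : ℕ} {p : MvPolynomial (Fin 2) R}
    (hp : p.totalDegree ≤ n + 1) :
    (p - ∑ k, coeff (formExponent (n + 1) k) p •
      monomial (formExponent (n + 1) k) (1 : R)).totalDegree ≤ n := by
  refine Finset.sup_le fun s hs => ?_
  rw [mem_support_iff, coeff_sub, coeff_sum] at hs
  simp only [coeff_smul, coeff_monomial, smul_eq_mul, mul_ite, mul_one, mul_zero] at hs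
  change s.degree ≤ n
  by_contra! n_lt
  rcases Nat.lt_or_eq_of_le (Nat.succ_le_of_lt n_lt) with lt_degree | degree_eq
  · refine hs ?_
    rw [coeff_eq_zero_of_totalDegree_lt (hp.trans_lt lt_degree), Finset.sum_eq_zero, sub_zero]
    rintro k -
    refine if_neg ?_
    rintro rfl
    exact lt_degree.ne (degree_formExponent k).symm
  · obtain ⟨l, rfl⟩ := exists_formExponent_eq degree_eq.symm
    simp [formExponent_injective.eq_iff] at hs

end BinaryForms

section LinearPencil

variable {R : Type*} [CommRing R] {m : ℕ}

/-- The matrix whose row `k` expresses the relation `x₂ f_k - x₁ f_{k+1} = ∑ j, c k j * f_j`. -/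
def relationMatrix (c : Matrix (Fin m) (Fin (m + 1)) R) :
    Matrix (Fin m) (Fin (m + 1)) (MvPolynomial (Fin 2) R) :=
  Matrix.of fun k j =>
    (if j = k.castSucc then X 1 else 0) - (if j = k.succ then X 0 else 0) - C (c k j)

theorem relationMatrix_mulVec_apply (c : Matrix (Fin m) (Fin (m + 1)) R)
    (f : Fin (m + 1) → MvPolynomial (Fin 2) R) (k : Fin m) :
    (relationMatrix c *ᵥ f) k = X 1 * f k.castSucc - X 0 * f k.succ - ∑ j, c k j • f j := by
  simp only [relationMatrix, Matrix.mulVec, dotProduct, Matrix.of_apply, sub_mul, ite_mul,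
    zero_mul, C_mul', Finset.sum_sub_distrib, Finset.sum_ite_eq', Finset.mem_univ, if_true]

theorem relationMatrix_apply_mem [Nontrivial R] (c : Matrix (Fin m) (Fin (m + 1)) R) (k : Fin m)
    (j : Fin (m + 1)) : relationMatrix c k j ∈ restrictTotalDegree (Fin 2) R 1 := by
  have X_mem : ∀ i, X i ∈ restrictTotalDegree (Fin 2) R 1 := fun i =>
    (mem_restrictTotalDegree ..).2 (totalDegree_X i).le
  refine Submodule.sub_mem _ (Submodule.sub_mem _ ?_ ?_) ((mem_restrictTotalDegree ..).2 (by simp))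
  · split_ifs
    exacts [X_mem 1, Submodule.zero_mem _]
  · split_ifs
    exacts [X_mem 0, Submodule.zero_mem _]

/-- Setting `x₁ = 0` and `x₂ = t` turns the first `m` columns into the characteristic matrix of the
first `m` columns of `c`. -/
theorem det_relationMatrix_submatrix_ne_zero [Nontrivial R] (c : Matrix (Fin m) (Fin (m + 1)) R) :
    ((relationMatrix c).submatrix id Fin.castSucc).det ≠ 0 := by
  let ψ : MvPolynomial (Fin 2) R →+* Polynomial R := eval₂Hom Polynomial.C ![0, Polynomial.X]
  have map_eq_charmatrix : ψ.mapMatrix ((relationMatrix c).submatrix id Fin.castSucc) =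
      (c.submatrix id Fin.castSucc).charmatrix := by
    ext1 k j
    simp only [RingHom.mapMatrix_apply, Matrix.map_apply, Matrix.submatrix_apply, id,
      relationMatrix, Matrix.of_apply, map_sub, Matrix.charmatrix_apply, Matrix.diagonal_apply,
      apply_ite ψ]
    simp [ψ, eq_comm]
  intro det_eq_zero
  have charpoly_eq_zero := congrArg ψ det_eq_zero
  rw [RingHom.map_det, map_eq_charmatrix, map_zero] at charpoly_eq_zero
  exact (Matrix.charpoly_monic _).ne_zero charpoly_eq_zero

theorem rank_map_relationMatrix [Nontrivial R] (L : Type*) [Field L]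
    [Algebra (MvPolynomial (Fin 2) R) L] [IsFractionRing (MvPolynomial (Fin 2) R) L]
    (c : Matrix (Fin m) (Fin (m + 1)) R) :
    ((relationMatrix c).map (algebraMap _ L)).rank = m := by
  refine le_antisymm (Matrix.rank_le_height _) ?_
  refine le_trans (le_of_eq ?_) (Matrix.rank_submatrix_le _ id Fin.castSucc)
  rw [Matrix.rank_of_det_ne_zero, Fintype.card_fin]
  rw [Matrix.submatrix_map, ← RingHom.mapMatrix_apply, ← RingHom.map_det]
  exact (map_ne_zero_iff _ (IsFractionRing.injective _ L)).2
    (det_relationMatrix_submatrix_ne_zero c)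

end LinearPencil

/-- `M` is an `m × (m + 1)` matrix of polynomials of degree at most `1` that has rank `m` over the
field of rational functions and whose rows are syzygies of `h`. -/
structure IsFullRankLinearSyzygy {σ K : Type*} [Field K] {m : ℕ}
    (h : Fin (m + 1) → MvPolynomial σ K)
    (M : Matrix (Fin m) (Fin (m + 1)) (MvPolynomial σ K)) : Prop where
  mem_restrictTotalDegree_one : ∀ i j, M i j ∈ restrictTotalDegree σ K 1
  mulVec_eq_zero : M *ᵥ h = 0
  rank_eq : (M.map (algebraMap _ (FractionRing (MvPolynomial σ K)))).rank = m

theorem IsFullRankLinearSyzygy.mul_map_C {σ K : Type*} [Field K] {m : ℕ}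
    {h : Fin (m + 1) → MvPolynomial σ K} {M : Matrix (Fin m) (Fin (m + 1)) (MvPolynomial σ K)}
    {A B : Matrix (Fin (m + 1)) (Fin (m + 1)) K} (hM : IsFullRankLinearSyzygy (A.map C *ᵥ h) M)
    (hAB : A * B = 1) : IsFullRankLinearSyzygy h (M * A.map (C (σ := σ))) where
  mem_restrictTotalDegree_one i j := by
    rw [Matrix.mul_apply]
    refine Submodule.sum_mem _ fun l _ => ?_
    rw [Matrix.map_apply, mul_comm, C_mul']
    exact Submodule.smul_mem _ _ (hM.mem_restrictTotalDegree_one i l)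
  mulVec_eq_zero := by rw [← Matrix.mulVec_mulVec, hM.mulVec_eq_zero]
  rank_eq := by
    refine le_antisymm (Matrix.rank_le_height _) ?_
    have mul_inverse : M * A.map (C (σ := σ)) * B.map (C (σ := σ)) = M := by
      rw [Matrix.mul_assoc, ← Matrix.map_mul, hAB, Matrix.map_one _ C_0 C_1, Matrix.mul_one]
    let φ := algebraMap (MvPolynomial σ K) (FractionRing (MvPolynomial σ K))
    calc m = (M.map φ).rank := hM.rank_eq.symm
      _ = ((M * A.map (C (σ := σ))).map φ * (B.map (C (σ := σ))).map φ).rank := by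
        rw [← Matrix.map_mul, mul_inverse]
      _ ≤ ((M * A.map (C (σ := σ))).map φ).rank := Matrix.rank_mul_le_left _ _

theorem isFullRankLinearSyzygy_iff {n : ℕ} {h : Fin (n + 2) → BPoly}
    {M : Matrix (Fin (n + 1)) (Fin (n + 2)) BPoly} :
    IsFullRankLinearSyzygy h M ↔ IsLinSyz n h M ∧ ratRank M = n + 1 :=
  ⟨fun hM => ⟨⟨hM.1, congrFun hM.2⟩, hM.3⟩, fun hM => ⟨hM.1.1, funext hM.1.2, hM.2⟩⟩

section ComplementaryIdeal

variable {K : Type*} [Field K] {n : ℕ} {I : Ideal (MvPolynomial (Fin 2) K)}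
  (hI : IsCompl (I.restrictScalars K) (restrictTotalDegree (Fin 2) K n))

/-- The elements `f_k` of the border basis of `I` with respect to its complement `Π_n`: the
component in `I` of the monomial `x₁^{n+1-k} x₂^k`. -/
def borderBasis (k : Fin (n + 1 + 1)) : MvPolynomial (Fin 2) K :=
  (I.restrictScalars K).projection _ hI (monomial (formExponent (n + 1) k) 1)

theorem borderBasis_mem (k : Fin (n + 1 + 1)) : borderBasis hI k ∈ I :=
  Submodule.projection_apply_mem hI _

theorem totalDegree_monomial_sub_borderBasis_le (k : Fin (n + 1 + 1)) :
    (monomial (formExponent (n + 1) k) 1 - borderBasis hI k).totalDegree ≤ n :=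
  (mem_restrictTotalDegree ..).1 (Submodule.sub_projection_mem hI _)

theorem coeff_borderBasis (k l : Fin (n + 1 + 1)) :
    coeff (formExponent (n + 1) l) (borderBasis hI k) = if k = l then 1 else 0 := by
  have coeff_remainder : coeff (formExponent (n + 1) l)
      (monomial (formExponent (n + 1) k) 1 - borderBasis hI k) = 0 := by
    apply coeff_eq_zero_of_totalDegree_lt
    change _ < (formExponent (n + 1) l).degree
    rw [degree_formExponent]
    exact Nat.lt_succ_of_le (totalDegree_monomial_sub_borderBasis_le hI k)
  rw [coeff_sub, sub_eq_zero] at coeff_remainder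
  simp only [← coeff_remainder, coeff_monomial, formExponent_injective.eq_iff]

theorem degLex_degree_borderBasis (k : Fin (n + 1 + 1)) :
    MonomialOrder.degLex.degree (borderBasis hI k) = formExponent (n + 1) k := by
  apply degLex_degree_eq_of_totalDegree_monomial_sub_lt
  rw [degree_formExponent]
  exact Nat.lt_succ_of_le (totalDegree_monomial_sub_borderBasis_le hI k)

theorem totalDegree_borderBasis (k : Fin (n + 1 + 1)) : (borderBasis hI k).totalDegree = n + 1 := by
  rw [← degree_degLexDegree, degLex_degree_borderBasis, degree_formExponent]

theorem eq_sum_smul_borderBasis {p : MvPolynomial (Fin 2) K} (hp : p ∈ I)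
    (hdeg : p.totalDegree ≤ n + 1) :
    p = ∑ k, coeff (formExponent (n + 1) k) p • borderBasis hI k := by
  have remainder_mem := (mem_restrictTotalDegree ..).2
    (totalDegree_sub_sum_monomial_formExponent_le hdeg)
  have projection_remainder := (Submodule.projection_apply_eq_zero_iff hI).2 remainder_mem
  have projection_self : (I.restrictScalars K).projection _ hI p = p :=
    (Submodule.projection_eq_self_iff hI p).2 hp
  rw [map_sub, projection_self, map_sum, sub_eq_zero] at projection_remainder
  simpa only [map_smul, borderBasis] using projection_remainder

theorem exists_relationMatrix_mulVec_borderBasis_eq_zero :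
    ∃ c : Matrix (Fin (n + 1)) (Fin (n + 1 + 1)) K, relationMatrix c *ᵥ borderBasis hI = 0 := by
  let r (k : Fin (n + 1)) := X 1 * borderBasis hI k.castSucc - X 0 * borderBasis hI k.succ
  have r_mem : ∀ k, r k ∈ I := fun k =>
    I.sub_mem (I.mul_mem_left _ (borderBasis_mem hI _)) (I.mul_mem_left _ (borderBasis_mem hI _))
  have X_mul_remainder_le : ∀ (i : Fin 2) (k : Fin (n + 1 + 1)),
      (X i * (monomial (formExponent (n + 1) k) 1 - borderBasis hI k)).totalDegree ≤ n + 1 :=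
    fun i k => by
      have remainder_le := totalDegree_monomial_sub_borderBasis_le hI k
      refine (totalDegree_mul _ _).trans ?_
      rw [totalDegree_X]
      lia
  have r_eq : ∀ k, r k =
      X 0 * (monomial (formExponent (n + 1) k.succ) 1 - borderBasis hI k.succ) -
      X 1 * (monomial (formExponent (n + 1) k.castSucc) 1 - borderBasis hI k.castSucc) :=
    fun k => by
      rw [mul_sub, mul_sub, X_one_mul_monomial_formExponent_castSucc]
      ring
  have totalDegree_r_le : ∀ k, (r k).totalDegree ≤ n + 1 := fun k => by
    rw [r_eq]
    exact (totalDegree_sub _ _).trans (max_le (X_mul_remainder_le _ _) (X_mul_remainder_le _ _))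
  refine ⟨Matrix.of fun k j => coeff (formExponent (n + 1) j) (r k), funext fun k => ?_⟩
  rw [relationMatrix_mulVec_apply]
  exact sub_eq_zero.2 (eq_sum_smul_borderBasis hI (r_mem k) (totalDegree_r_le k))

theorem isUnit_of_forall_dvd_borderBasis {b : MvPolynomial (Fin 2) K}
    (hb : ∀ k, b ∣ borderBasis hI k) : IsUnit b := by
  have degree_le : ∀ k, MonomialOrder.degLex.degree b ≤ formExponent (n + 1) k := fun k => by
    obtain ⟨a, ha⟩ := hb k
    have borderBasis_ne_zero : b * a ≠ 0 := by
      rw [← ha]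
      intro h0
      simpa [h0] using totalDegree_borderBasis hI k
    rw [← degLex_degree_borderBasis hI k, ha, MonomialOrder.degree_mul' borderBasis_ne_zero]
    exact le_self_add
  have degree_eq_zero : MonomialOrder.degLex.degree b = 0 := by
    refine Finsupp.ext (Fin.forall_fin_two.2 ⟨Nat.le_zero.1 ?_, Nat.le_zero.1 ?_⟩)
    · simpa [formExponent_apply_zero] using degree_le (Fin.last _) 0
    · simpa [formExponent_apply_one] using degree_le 0 1
  have b_eq_C := MonomialOrder.eq_C_of_degree_eq_zero degree_eq_zero
  rw [b_eq_C] at hb ⊢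
  refine (isUnit_iff_ne_zero.2 fun coeff_eq_zero => ?_).map C
  rw [coeff_eq_zero, map_zero] at hb
  simpa [zero_dvd_iff.1 (hb 0)] using totalDegree_borderBasis hI 0

theorem exists_borderBasis_change_of_basis {h : Fin (n + 1 + 1) → MvPolynomial (Fin 2) K}
    (hspan : I.restrictScalars K ⊓ restrictTotalDegree (Fin 2) K (n + 1) ≤
      Submodule.span K (Set.range h)) :
    ∃ A B : Matrix (Fin (n + 1 + 1)) (Fin (n + 1 + 1)) K, A * B = 1 ∧
      borderBasis hI = A.map C *ᵥ h ∧ h = B.map C *ᵥ borderBasis hI := by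
  have borderBasis_mem_span : ∀ k, ∃ a : Fin (n + 1 + 1) → K, ∑ j, a j • h j = borderBasis hI k :=
    fun k => (Submodule.mem_span_range_iff_exists_fun K).1 (hspan
      ⟨borderBasis_mem hI k, (mem_restrictTotalDegree ..).2 (totalDegree_borderBasis hI k).le⟩)
  choose A hA using borderBasis_mem_span
  let B : Matrix (Fin (n + 1 + 1)) (Fin (n + 1 + 1)) K :=
    Matrix.of fun j l => coeff (formExponent (n + 1) l) (h j)
  have mul_eq_one : Matrix.of A * B = 1 := by
    ext k l
    rw [Matrix.one_apply, ← coeff_borderBasis hI k l, ← hA k, coeff_sum]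
    simp [Matrix.mul_apply, B]
  have borderBasis_eq : borderBasis hI = (Matrix.of A).map C *ᵥ h := by
    ext1 k
    simp [← hA k, Matrix.mulVec, dotProduct, C_mul']
  refine ⟨Matrix.of A, B, mul_eq_one, borderBasis_eq, ?_⟩
  rw [borderBasis_eq, Matrix.mulVec_mulVec, ← Matrix.map_mul, mul_eq_one_comm.1 mul_eq_one,
    Matrix.map_one _ C_0 C_1, Matrix.one_mulVec]

end ComplementaryIdeal

section SpanningFamily

variable {K : Type*} [Field K] {n : ℕ} {I : Ideal (MvPolynomial (Fin 2) K)}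
  {h : Fin (n + 1 + 1) → MvPolynomial (Fin 2) K}

theorem mem_of_le_span
    (hI : IsCompl (I.restrictScalars K) (restrictTotalDegree (Fin 2) K n))
    (hspan : I.restrictScalars K ⊓ restrictTotalDegree (Fin 2) K (n + 1) ≤
      Submodule.span K (Set.range h)) (j : Fin (n + 1 + 1)) : h j ∈ I := by
  obtain ⟨A, B, -, -, h_eq⟩ := exists_borderBasis_change_of_basis hI hspan
  rw [h_eq, Matrix.mulVec, dotProduct]
  exact sum_mem fun k _ => I.mul_mem_left _ (borderBasis_mem hI k)

theorem isUnit_of_forall_dvd_of_le_span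
    (hI : IsCompl (I.restrictScalars K) (restrictTotalDegree (Fin 2) K n))
    (hspan : I.restrictScalars K ⊓ restrictTotalDegree (Fin 2) K (n + 1) ≤
      Submodule.span K (Set.range h))
    {b : MvPolynomial (Fin 2) K} (hb : ∀ j, b ∣ h j) : IsUnit b := by
  obtain ⟨A, B, -, borderBasis_eq, -⟩ := exists_borderBasis_change_of_basis hI hspan
  refine isUnit_of_forall_dvd_borderBasis hI fun k => ?_
  rw [borderBasis_eq, Matrix.mulVec, dotProduct]
  exact Finset.dvd_sum fun j _ => (hb j).mul_left _

theorem exists_isFullRankLinearSyzygy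
    (hI : IsCompl (I.restrictScalars K) (restrictTotalDegree (Fin 2) K n))
    (hspan : I.restrictScalars K ⊓ restrictTotalDegree (Fin 2) K (n + 1) ≤
      Submodule.span K (Set.range h)) :
    ∃ M, IsFullRankLinearSyzygy h M := by
  obtain ⟨A, B, mul_eq_one, borderBasis_eq, -⟩ := exists_borderBasis_change_of_basis hI hspan
  obtain ⟨c, hc⟩ := exists_relationMatrix_mulVec_borderBasis_eq_zero hI
  have syzygy_borderBasis : IsFullRankLinearSyzygy (borderBasis hI) (relationMatrix c) :=
    ⟨relationMatrix_apply_mem c, hc, rank_map_relationMatrix _ c⟩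
  rw [borderBasis_eq] at syzygy_borderBasis
  exact ⟨_, syzygy_borderBasis.mul_map_C mul_eq_one⟩

theorem IsFullRankLinearSyzygy.exists_eq_smul_signedMinors
    (hI : IsCompl (I.restrictScalars K) (restrictTotalDegree (Fin 2) K n))
    (hspan : I.restrictScalars K ⊓ restrictTotalDegree (Fin 2) K (n + 1) ≤
      Submodule.span K (Set.range h))
    {M : Matrix (Fin (n + 1)) (Fin (n + 1 + 1)) (MvPolynomial (Fin 2) K)}
    (hM : IsFullRankLinearSyzygy h M) : ∃ w : K, w ≠ 0 ∧ h = w • signedMinors M := by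
  obtain ⟨g, hg0, minors_eq⟩ := exists_signedMinors_eq_smul _ hM.rank_eq hM.mulVec_eq_zero
    fun b hb => isUnit_of_forall_dvd_of_le_span hI hspan hb
  obtain ⟨j, hj⟩ : ∃ j, h j ≠ 0 := by
    by_contra! h_eq_zero
    exact not_isUnit_zero (isUnit_of_forall_dvd_of_le_span hI hspan fun j => (h_eq_zero j).symm.dvd)
  have totalDegree_g : g.totalDegree = 0 := by
    have lt_degree := lt_totalDegree_of_mem_of_disjoint hI.disjoint (mem_of_le_span hI hspan j) hj
    have minor_le := totalDegree_signedMinors_le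
      (fun i k => (mem_restrictTotalDegree ..).1 (hM.mem_restrictTotalDegree_one i k)) j
    rw [minors_eq, Pi.smul_apply, smul_eq_mul, totalDegree_mul_of_isDomain hg0 hj] at minor_le
    lia
  obtain ⟨t, rfl⟩ : ∃ t, g = C t := ⟨_, totalDegree_eq_zero_iff_eq_C.1 totalDegree_g⟩
  have t_ne_zero : t ≠ 0 := by
    rintro rfl
    exact hg0 C_0
  refine ⟨t⁻¹, inv_ne_zero t_ne_zero, funext fun j => ?_⟩
  rw [minors_eq, Pi.smul_apply, Pi.smul_apply, smul_eq_mul, C_mul', inv_smul_smul₀ t_ne_zero]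

end SpanningFamily

theorem Poised.isCompl {n : ℕ} {Y : Finset Pt} (hY : Poised n Y) :
    IsCompl ((vIdeal (Y : Set Pt)).restrictScalars ℝ) (restrictTotalDegree (Fin 2) ℝ n) := by
  constructor
  · refine Submodule.disjoint_def.2 fun p hpI hpn => ?_
    exact (hY 0).unique ⟨hpn, hpI⟩ ⟨Submodule.zero_mem _, fun y _ => map_zero _⟩
  · refine codisjoint_iff.2 (eq_top_iff.2 fun p _ => ?_)
    obtain ⟨q, ⟨hqn, hq⟩, -⟩ := hY fun y => eval y p
    refine Submodule.mem_sup.2 ⟨p - q, fun y hy => ?_, q, hqn, sub_add_cancel p q⟩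
    rw [map_sub, hq y hy, sub_self]

theorem IsHBasisFam.inf_restrictTotalDegree_le_span {ι : Type} [Fintype ι] {n : ℕ}
    {I : Ideal BPoly} (hI : Disjoint (I.restrictScalars ℝ) (restrictTotalDegree (Fin 2) ℝ n))
    {h : ι → BPoly} (hh : IsHBasisFam I h) :
    I.restrictScalars ℝ ⊓ restrictTotalDegree (Fin 2) ℝ (n + 1) ≤
      Submodule.span ℝ (Set.range h) := by
  rintro p ⟨hpI, hpn⟩
  obtain ⟨g, hg, p_eq⟩ := hh.2 p hpI
  rw [p_eq]
  refine sum_mem fun i _ => ?_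
  by_cases hi : h i = 0
  · rw [hi, mul_zero]
    exact zero_mem _
  have totalDegree_g : (g i).totalDegree = 0 := by
    have p_le := (mem_restrictTotalDegree ..).1 hpn
    have lt_degree := lt_totalDegree_of_mem_of_disjoint hI (hh.1 i) hi
    have g_le := hg i
    lia
  rw [totalDegree_eq_zero_iff_eq_C.1 totalDegree_g, C_mul']
  exact Submodule.smul_mem _ _ (Submodule.subset_span (Set.mem_range_self i))

theorem stmt13_general {K : Type*} [Field K] {n : ℕ} {I : Ideal (MvPolynomial (Fin 2) K)}
    (hI : IsCompl (I.restrictScalars K) (restrictTotalDegree (Fin 2) K n))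
    {h : Fin (n + 2) → MvPolynomial (Fin 2) K}
    (hspan : I.restrictScalars K ⊓ restrictTotalDegree (Fin 2) K (n + 1) ≤
      Submodule.span K (Set.range h)) :
    (∃ M, IsFullRankLinearSyzygy h M) ∧
    ∀ M, IsFullRankLinearSyzygy h M → ∃ w : K, w ≠ 0 ∧ ∀ j : Fin (n + 2),
      h j = (-1) ^ (j : ℕ) * C w * (M.submatrix id j.succAbove).det := by
  refine ⟨exists_isFullRankLinearSyzygy hI hspan, fun M hM => ?_⟩
  obtain ⟨w, hw, h_eq⟩ := hM.exists_eq_smul_signedMinors hI hspan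
  refine ⟨w, hw, fun j => ?_⟩
  rw [congrFun h_eq j, Pi.smul_apply, ← C_mul', signedMinors]
  ring

/-- For a `Π_n`-poised set `Y_n`, every H-basis
`h_0, …, h_{n+1}` of `I(Y_n)` admits a linear syzygy matrix
`Σ ∈ Π_1^{(n+1)×(n+2)}` of rank `n+1`, and any such matrix determines the
H-basis up to a nonzero constant: `h_j = (−1)^j w det Σ_j`. -/
theorem stmt13 (n : ℕ) (Y : Finset Pt) (hY : Poised n Y)
    (h : Fin (n + 2) → BPoly)
    (hHB : IsHBasisFam (vIdeal (Y : Set Pt)) h) :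
    (∃ M : Matrix (Fin (n + 1)) (Fin (n + 2)) BPoly,
        IsLinSyz n h M ∧ ratRank M = n + 1) ∧
    ∀ M : Matrix (Fin (n + 1)) (Fin (n + 2)) BPoly,
      IsLinSyz n h M → ratRank M = n + 1 →
        ∃ w : ℝ, w ≠ 0 ∧ ∀ j : Fin (n + 2),
          h j = (-1) ^ (j : ℕ) * C w * (M.submatrix id j.succAbove).det := by
  simpa only [isFullRankLinearSyzygy_iff, and_imp] using
    stmt13_general hY.isCompl (hHB.inf_restrictTotalDegree_le_span hY.isCompl.disjoint)
end
end

section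
/- Let Y_n ⊂ ℝ² be a Π_n-poised set containing a maximal line K = V(k) (k ∈ Π of exact degree 1, #(Y_n ∩ K) = n + 1). Then there exists a vector-space basis h_0, …, h_{n+1} of Π_{n+1} ∩ I(Y_n) that admits a linear syzygy matrix Σ(x) ∈ Π_1^{(n+1)×(n+2)} of rank n + 1 whose last column equals k(x)·e_{n+1}. -/
open MvPolynomial

noncomputable section

/-!
Let `Z` be the set of points of `Y` off the line. A polynomial of degree `n - 1` vanishing on `Z`
vanishes on `Y` after multiplication by `k`, so counting dimensions shows that `Z` is
`Π_{n-1}`-poised. Hence the polynomials of degree less than `n` are a complement of `J = I(Z)`, and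
projecting the monomials `x₁ⁱ x₂ⁿ⁻ⁱ` to `J` gives a basis `g_0, …, g_n` of `Π_n ∩ J`. The relations
`x₂ · x₁ⁱ⁺¹ x₂ⁿ⁻ⁱ⁻¹ = x₁ · x₁ⁱ x₂ⁿ⁻ⁱ` lift to `n` linear syzygies of the `g_i`.

The products `k g_i` are `n + 1` independent elements of the `(n + 2)`-dimensional space
`Π_{n+1} ∩ I(Y)`; complete them to a basis by `w`. Since `w` lies in `Π_{n+1} ∩ J = Π_1 (Π_n ∩ J)`,
it is `∑ l_i g_i` with linear `l_i`, and `k w = ∑ l_i (k g_i)` is the last syzygy. The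
minor without the column of `k g_n` is `k` times a determinant which, up to sign, is a
characteristic polynomial in `x₁` at `x₂ = 0`, so the rank is `n + 1`.
-/

section LinearAlgebra

lemma map_projection_eq_inf {R E : Type*} [Ring R] [AddCommGroup E] [Module R E]
    {p q W : Submodule R E} (hpq : IsCompl p q) (hqW : q ≤ W) :
    W.map (p.projection q hpq) = W ⊓ p := by
  refine le_antisymm ?_ fun x ⟨hxW, hxp⟩ ↦
    ⟨x, hxW, Submodule.projection_apply_of_mem_left hpq hxp⟩
  rintro _ ⟨x, hxW, rfl⟩
  refine ⟨?_, Submodule.projection_apply_mem hpq x⟩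
  have hsub : x - p.projection q hpq x ∈ q := by
    rw [← Submodule.projection_apply_eq_zero_iff hpq, map_sub,
      Submodule.projection_apply_of_mem_left hpq (Submodule.projection_apply_mem hpq x), sub_self]
  simpa using W.sub_mem hxW (hqW hsub)

lemma exists_snoc_linearIndependent_span_eq {K V : Type*} [DivisionRing K] [AddCommGroup V]
    [Module K V] {m : ℕ} {v : Fin m → V} (hv : LinearIndependent K v) {W : Submodule K V}
    (hvW : ∀ i, v i ∈ W) (hW : Module.finrank K W = m + 1) :
    ∃ w ∈ W, LinearIndependent K (Fin.snoc v w : Fin (m + 1) → V) ∧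
      Submodule.span K (Set.range (Fin.snoc v w : Fin (m + 1) → V)) = W := by
  have : FiniteDimensional K W := Module.finite_of_finrank_eq_succ hW
  obtain ⟨w, hwW, hw⟩ : ∃ w ∈ W, w ∉ Submodule.span K (Set.range v) := by
    by_contra! hle
    have := FiniteDimensional.span_of_finite K (Set.finite_range v)
    have := (Submodule.finrank_mono hle).trans (finrank_range_le_card v)
    rw [hW, Fintype.card_fin] at this
    omega
  have hli := hv.finSnoc hw
  refine ⟨w, hwW, hli, Submodule.eq_of_le_of_finrank_eq ?_ ?_⟩
  · rw [Submodule.span_le, Set.range_subset_iff]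
    exact Fin.lastCases (by simpa) (by simpa)
  · rw [finrank_span_eq_card hli, Fintype.card_fin, hW]

lemma exists_sum_mul_eq_of_mem_mul_span {R A ι : Type*} [CommSemiring R] [CommSemiring A]
    [Algebra R A] [Fintype ι] {P : Submodule R A} {g : ι → A} {x : A}
    (hx : x ∈ P * Submodule.span R (Set.range g)) :
    ∃ l : ι → A, (∀ i, l i ∈ P) ∧ ∑ i, l i * g i = x := by
  induction hx using Submodule.mul_induction_on' with
  | mem_mul_mem a ha b hb =>
    obtain ⟨c, rfl⟩ := (Submodule.mem_span_range_iff_exists_fun R).1 hb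
    refine ⟨fun i ↦ c i • a, fun i ↦ P.smul_mem _ ha, ?_⟩
    simp only [Finset.mul_sum, smul_mul_assoc, mul_smul_comm]
  | add x _ y _ hx hy =>
    obtain ⟨l, hl, rfl⟩ := hx
    obtain ⟨l', hl', rfl⟩ := hy
    exact ⟨l + l', fun i ↦ P.add_mem (hl i) (hl' i), by
      simp only [Pi.add_apply, add_mul, Finset.sum_add_distrib]⟩

end LinearAlgebra

section Degree

variable (σ R : Type*) [CommSemiring R]

/-- Polynomials of total degree less than `m`. For `m = n + 1` this is `Π_n`; the strict bound
makes the case `m = 0`, which plays the role of `Π_{-1}`, the zero space. -/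
def degreeLT (m : ℕ) : Submodule R (MvPolynomial σ R) :=
  restrictSupport R {s | s.degree < m}

variable {σ R}

lemma degreeLT_succ (m : ℕ) : degreeLT σ R (m + 1) = restrictTotalDegree σ R m := by
  simp only [degreeLT, restrictTotalDegree, Nat.lt_succ_iff]
  rfl

lemma degreeLT_mono {a b : ℕ} (h : a ≤ b) : degreeLT σ R a ≤ degreeLT σ R b :=
  restrictSupport_mono R fun _ hs ↦ lt_of_lt_of_le hs h

lemma homogeneousSubmodule_eq_restrictSupport (m : ℕ) :
    homogeneousSubmodule σ R m = restrictSupport R {s | s.degree = m} :=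
  homogeneousSubmodule_eq_finsupp_supported σ R m

lemma disjoint_homogeneousSubmodule_degreeLT (m : ℕ) :
    Disjoint (homogeneousSubmodule σ R m) (degreeLT σ R m) := by
  rw [Submodule.disjoint_def, homogeneousSubmodule_eq_restrictSupport]
  intro p hp hp'
  rw [← support_eq_empty, Finset.eq_empty_iff_forall_notMem]
  exact fun s hs ↦ (hp' hs).ne (hp hs)

lemma homogeneousSubmodule_sup_degreeLT (m : ℕ) :
    homogeneousSubmodule σ R m ⊔ degreeLT σ R m = degreeLT σ R (m + 1) := by
  rw [homogeneousSubmodule_eq_restrictSupport]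
  simp only [degreeLT, restrictSupport_eq_span]
  rw [← Submodule.span_union, ← Set.image_union]
  congr 2
  ext s
  simp only [Set.mem_union, Set.mem_ofPred_eq]
  omega

lemma X_mem_restrictTotalDegree_one (i : σ) :
    (X i : MvPolynomial σ R) ∈ restrictTotalDegree σ R 1 :=
  (mem_restrictTotalDegree _ _ _).2 <| (totalDegree_monomial_le _ _).trans (by simp)

lemma restrictTotalDegree_mul_degreeLT_le (a b : ℕ) :
    restrictTotalDegree σ R a * degreeLT σ R b ≤ degreeLT σ R (a + b) := by
  rw [← degreeLT_succ, degreeLT, degreeLT, ← restrictSupport_add]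
  apply restrictSupport_mono
  rintro _ ⟨s, hs, t, ht, rfl⟩
  simp only [Set.mem_ofPred_eq, map_add] at hs ht ⊢
  omega

lemma degreeLT_add_two_le (m : ℕ) :
    degreeLT σ R (m + 2) ≤ restrictTotalDegree σ R 1 * degreeLT σ R (m + 1) := by
  rw [← degreeLT_succ, degreeLT, degreeLT, degreeLT, ← restrictSupport_add]
  apply restrictSupport_mono
  intro s (hs : s.degree < m + 2)
  by_cases hs0 : s = 0
  · exact ⟨0, by simp, 0, by simp, by simp [hs0]⟩
  · obtain ⟨i, hi⟩ := Finsupp.ne_iff.1 hs0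
    obtain ⟨t, rfl⟩ := le_iff_exists_add.1 (Finsupp.single_le_iff.2 (Nat.one_le_iff_ne_zero.2 hi))
    have hdegree : (Finsupp.single i 1 + t).degree = 1 + t.degree := by simp
    exact ⟨_, by simp, t, show t.degree < m + 1 by omega, rfl⟩

variable (σ R) in
lemma fg_degreeLT [Finite σ] (m : ℕ) : (degreeLT σ R m).FG := by
  induction m with
  | zero => simpa [degreeLT, restrictSupport_eq_span] using Submodule.fg_bot
  | succ m ih =>
    rw [← homogeneousSubmodule_sup_degreeLT]
    exact (homogeneousSubmodule_fg σ R m).sup ih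

lemma degreeLT_add_two_inf_le {R : Type*} [CommRing R] {n : ℕ} {J : Ideal (MvPolynomial σ R)}
    (hJ : IsCompl (degreeLT σ R n) (J.restrictScalars R)) :
    degreeLT σ R (n + 2) ⊓ J.restrictScalars R ≤
      restrictTotalDegree σ R 1 * (degreeLT σ R (n + 1) ⊓ J.restrictScalars R) := by
  set P := restrictTotalDegree σ R 1
  set A := degreeLT σ R (n + 1) ⊓ J.restrictScalars R
  have hsplit : degreeLT σ R (n + 1) ≤ A ⊔ degreeLT σ R n := by
    rw [inf_sup_assoc_of_le _ (degreeLT_mono n.le_succ), hJ.symm.sup_eq_top, inf_top_eq]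
  have hA : A ≤ P * A := fun x hx ↦ by
    have hone : (1 : MvPolynomial σ R) ∈ P := by simp [P, mem_restrictTotalDegree]
    simpa only [one_mul] using Submodule.mul_mem_mul hone hx
  have hPA : P * A ≤ J.restrictScalars R :=
    Submodule.mul_le.2 fun a _ b hb ↦ J.mul_mem_left a hb.2
  have hdeg : degreeLT σ R (n + 2) ≤ P * A ⊔ degreeLT σ R (n + 1) := calc
    degreeLT σ R (n + 2) ≤ P * degreeLT σ R (n + 1) := degreeLT_add_two_le n
    _ ≤ P * A ⊔ P * degreeLT σ R n := by
      rw [← Submodule.mul_sup]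
      exact Submodule.smul_mono le_rfl hsplit
    _ ≤ P * A ⊔ degreeLT σ R (n + 1) := by
      rw [add_comm n 1]
      exact sup_le_sup_left (restrictTotalDegree_mul_degreeLT_le 1 n) _
  calc degreeLT σ R (n + 2) ⊓ J.restrictScalars R
    _ ≤ (P * A ⊔ degreeLT σ R (n + 1)) ⊓ J.restrictScalars R := inf_le_inf_right _ hdeg
    _ = P * A ⊔ A := sup_inf_assoc_of_le _ hPA
    _ ≤ P * A := sup_le le_rfl hA

end Degree

section BinaryForms

/-- The exponent of the monomial `X 0 ^ i * X 1 ^ (n - i)`. -/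
def binaryExponent (n : ℕ) (i : Fin (n + 1)) : Fin 2 →₀ ℕ :=
  Finsupp.single 0 (i : ℕ) + Finsupp.single 1 (n - i)

lemma binaryExponent_injective (n : ℕ) : Function.Injective (binaryExponent n) := fun i j hij ↦ by
  simpa [binaryExponent, Fin.ext_iff] using DFunLike.congr_fun hij 0

lemma range_binaryExponent (n : ℕ) : Set.range (binaryExponent n) = {s | s.degree = n} := by
  ext s
  simp only [Set.mem_range, Set.mem_ofPred_eq, Finsupp.degree_eq_sum, Fin.sum_univ_two]
  constructor
  · rintro ⟨i, rfl⟩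
    simpa [binaryExponent] using Nat.add_sub_of_le (Nat.lt_succ_iff.1 i.2)
  · intro hs
    refine ⟨⟨s 0, by omega⟩, ?_⟩
    ext j
    fin_cases j
    · simp [binaryExponent]
    · simpa [binaryExponent] using Nat.sub_eq_of_eq_add' hs.symm

variable (R : Type*) [CommSemiring R]

/-- The monomials `X 0 ^ i * X 1 ^ (n - i)`, a basis of the binary forms of degree `n`. -/
def binaryMonomial (n : ℕ) (i : Fin (n + 1)) : MvPolynomial (Fin 2) R :=
  monomial (binaryExponent n i) 1

lemma X_one_mul_binaryMonomial_succ (n : ℕ) (i : Fin n) :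
    X 1 * binaryMonomial R n i.succ = X 0 * binaryMonomial R n i.castSucc := by
  have hexp : Finsupp.single 1 1 + binaryExponent n i.succ =
      Finsupp.single 0 1 + binaryExponent n i.castSucc := by
    ext j
    fin_cases j <;> simp [binaryExponent] <;> omega
  simp only [binaryMonomial, X, monomial_mul, mul_one, hexp]

lemma linearIndependent_binaryMonomial (n : ℕ) :
    LinearIndependent R (binaryMonomial R n) := by
  have := (basisMonomials (Fin 2) R).linearIndependent.comp _ (binaryExponent_injective n)
  rwa [coe_basisMonomials] at this

lemma span_binaryMonomial (n : ℕ) :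
    Submodule.span R (Set.range (binaryMonomial R n)) = homogeneousSubmodule (Fin 2) R n := by
  rw [homogeneousSubmodule_eq_restrictSupport, restrictSupport_eq_span, ← range_binaryExponent,
    ← Set.range_comp]
  rfl

lemma finrank_homogeneousSubmodule_fin_two [Nontrivial R] (n : ℕ) :
    Module.finrank R (homogeneousSubmodule (Fin 2) R n) = n + 1 := by
  rw [← span_binaryMonomial, finrank_span_eq_card (linearIndependent_binaryMonomial R n),
    Fintype.card_fin]

lemma finrank_degreeLT_succ (F : Type*) [Field F] (n : ℕ) :
    Module.finrank F (degreeLT (Fin 2) F (n + 1)) =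
      Module.finrank F (degreeLT (Fin 2) F n) + (n + 1) := by
  have := Module.Finite.of_fg (homogeneousSubmodule_fg (Fin 2) F n)
  have := Module.Finite.of_fg (fg_degreeLT (Fin 2) F n)
  have hsum := Submodule.finrank_sup_add_finrank_inf_eq (homogeneousSubmodule (Fin 2) F n)
    (degreeLT (Fin 2) F n)
  rw [homogeneousSubmodule_sup_degreeLT, (disjoint_homogeneousSubmodule_degreeLT n).eq_bot,
    finrank_bot, finrank_homogeneousSubmodule_fin_two] at hsum
  omega

end BinaryForms

section Poised

variable {σ F : Type*} [Field F]

/-- Unique solvability on `Y` of every interpolation problem in the space `W` of polynomials;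
`W = Π_n` gives the notion of a `Π_n`-poised set. -/
def IsPoised (W : Submodule F (MvPolynomial σ F)) (Y : Finset (σ → F)) : Prop :=
  ∀ f : (σ → F) → F, ∃! p : MvPolynomial σ F, p ∈ W ∧ ∀ y ∈ Y, eval y p = f y

/-- Restriction of the polynomials in `W` to functions on `Y`. -/
def evalOn (W : Submodule F (MvPolynomial σ F)) (Y : Finset (σ → F)) : W →ₗ[F] (Y → F) :=
  LinearMap.pi fun y ↦ (aeval y.1).toLinearMap ∘ₗ W.subtype

lemma evalOn_apply {W : Submodule F (MvPolynomial σ F)} {Y : Finset (σ → F)} (p : W) (y : Y) :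
    evalOn W Y p y = eval y.1 p.1 := by
  simp [evalOn, aeval_eq_eval]

variable {W W' : Submodule F (MvPolynomial σ F)} {Y : Finset (σ → F)}

lemma isPoised_iff_bijective_evalOn : IsPoised W Y ↔ Function.Bijective (evalOn W Y) := by
  have evalOn_eq_iff {p : W} {f : Y → F} : evalOn W Y p = f ↔ ∀ y : Y, eval y.1 p.1 = f y := by
    simp only [funext_iff, evalOn_apply]
  rw [Function.bijective_iff_existsUnique]
  constructor
  · intro hY f
    obtain ⟨p, ⟨hpW, hpY⟩, huniq⟩ := hY (Function.extend Subtype.val f 0)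
    refine ⟨⟨p, hpW⟩, evalOn_eq_iff.2 fun y ↦ ?_, fun q hq ↦ Subtype.ext (huniq q ⟨q.2, ?_⟩)⟩
    · rw [hpY y y.2, Subtype.val_injective.extend_apply]
    · intro y hy
      rw [evalOn_eq_iff.1 hq ⟨y, hy⟩, ← Subtype.val_injective.extend_apply f 0 ⟨y, hy⟩]
  · intro hbij f
    obtain ⟨p, hp, huniq⟩ := hbij fun y ↦ f y
    refine ⟨p, ⟨p.2, fun y hy ↦ evalOn_eq_iff.1 hp ⟨y, hy⟩⟩, fun q ⟨hqW, hqY⟩ ↦ ?_⟩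
    exact congrArg Subtype.val (huniq ⟨q, hqW⟩ (evalOn_eq_iff.2 fun y ↦ hqY y y.2))

namespace IsPoised

lemma finrank_eq_card (hY : IsPoised W Y) : Module.finrank F W = Y.card := by
  rw [(LinearEquiv.ofBijective _ (isPoised_iff_bijective_evalOn.1 hY)).finrank_eq,
    Module.finrank_pi, Fintype.card_coe]

lemma eq_zero_of_forall_eval_eq_zero (hY : IsPoised W Y) {p : MvPolynomial σ F} (hp : p ∈ W)
    (hpY : ∀ y ∈ Y, eval y p = 0) : p = 0 :=
  (hY 0).unique ⟨hp, hpY⟩ ⟨W.zero_mem, by simp⟩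

lemma isCompl_vanishingIdeal (hY : IsPoised W Y) :
    IsCompl W ((vanishingIdeal F (Y : Set (σ → F))).restrictScalars F) := by
  constructor
  · rw [Submodule.disjoint_def]
    exact fun p hp hpY ↦ hY.eq_zero_of_forall_eval_eq_zero hp hpY
  · rw [codisjoint_iff, eq_top_iff]
    intro p _
    obtain ⟨q, ⟨hqW, hqY⟩, -⟩ := hY fun y ↦ eval y p
    refine Submodule.mem_sup.2 ⟨q, hqW, p - q, fun y hy ↦ ?_, add_sub_cancel q p⟩
    rw [aeval_eq_eval]
    simp [hqY y hy]

lemma filter_eval_ne_zero [DecidableEq F] (hY : IsPoised W Y) {k : MvPolynomial σ F} (hk : k ≠ 0)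
    (hkW : ∀ q ∈ W', k * q ∈ W)
    (hcard : Module.finrank F W = Module.finrank F W' + (Y.filter (eval · k = 0)).card) :
    IsPoised W' (Y.filter (eval · k ≠ 0)) := by
  set Z := Y.filter (eval · k ≠ 0)
  have hinj : Function.Injective (evalOn W' Z) := by
    rw [injective_iff_map_eq_zero]
    rintro ⟨q, hq⟩ hqZ
    have hkq : k * q = 0 := hY.eq_zero_of_forall_eval_eq_zero (hkW q hq) fun y hy ↦ by
      rw [map_mul, mul_eq_zero, or_iff_not_imp_left]
      exact fun hky ↦ (evalOn_apply _ _).symm.trans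
        (congrFun hqZ ⟨y, Finset.mem_filter.2 ⟨hy, hky⟩⟩)
    exact Subtype.ext ((mul_eq_zero.1 hkq).resolve_left hk)
  have hfinrank : Module.finrank F W' = Module.finrank F (Z → F) := by
    rw [Module.finrank_pi, Fintype.card_coe]
    have := Y.card_filter_add_card_filter_not (eval · k = 0)
    rw [← hY.finrank_eq_card, hcard, add_comm] at this
    exact (Nat.add_right_cancel this).symm
  have := Module.Finite.of_injective _ hinj
  exact isPoised_iff_bijective_evalOn.2
    ⟨hinj, (LinearMap.injective_iff_surjective_of_finrank_eq_finrank hfinrank).1 hinj⟩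

end IsPoised

end Poised

section ReducedBasis

variable {R : Type*} [CommRing R] {n : ℕ} {J : Ideal (MvPolynomial (Fin 2) R)}

/-- The component in `J` of the monomial `X 0 ^ i * X 1 ^ (n - i)` with respect to the
decomposition of the polynomial ring into the polynomials of degree less than `n` and `J`. These
are the elements of `Π_n ∩ J` whose leading forms are monomials. -/
def reducedBasis (hJ : IsCompl (degreeLT (Fin 2) R n) (J.restrictScalars R)) (i : Fin (n + 1)) :
    MvPolynomial (Fin 2) R :=
  (J.restrictScalars R).projection _ hJ.symm (binaryMonomial R n i)

variable (hJ : IsCompl (degreeLT (Fin 2) R n) (J.restrictScalars R))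

lemma reducedBasis_mem (i : Fin (n + 1)) : reducedBasis hJ i ∈ J :=
  Submodule.projection_apply_mem hJ.symm _

lemma reducedBasis_sub_binaryMonomial_mem (i : Fin (n + 1)) :
    reducedBasis hJ i - binaryMonomial R n i ∈ degreeLT (Fin 2) R n := by
  rw [← Submodule.projection_apply_eq_zero_iff hJ.symm, map_sub,
    Submodule.projection_apply_of_mem_left hJ.symm (reducedBasis_mem hJ i), reducedBasis, sub_self]

lemma linearIndependent_reducedBasis : LinearIndependent R (reducedBasis hJ) := by
  refine (linearIndependent_binaryMonomial R n).map ?_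
  rw [span_binaryMonomial, Submodule.ker_projection]
  exact disjoint_homogeneousSubmodule_degreeLT n

lemma span_reducedBasis :
    Submodule.span R (Set.range (reducedBasis hJ)) =
      degreeLT (Fin 2) R (n + 1) ⊓ J.restrictScalars R := by
  set π := (J.restrictScalars R).projection _ hJ.symm
  have hker : (degreeLT (Fin 2) R n).map π = ⊥ := by
    rw [← le_bot_iff, Submodule.map_le_iff_le_comap, Submodule.comap_bot,
      Submodule.ker_projection]
  calc Submodule.span R (Set.range (reducedBasis hJ))
    _ = (homogeneousSubmodule (Fin 2) R n).map π := by
      rw [← span_binaryMonomial, Submodule.map_span, ← Set.range_comp]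
      rfl
    _ = (homogeneousSubmodule (Fin 2) R n ⊔ degreeLT (Fin 2) R n).map π := by
      rw [Submodule.map_sup, hker, sup_bot_eq]
    _ = degreeLT (Fin 2) R (n + 1) ⊓ J.restrictScalars R := by
      rw [homogeneousSubmodule_sup_degreeLT,
        map_projection_eq_inf hJ.symm (degreeLT_mono n.le_succ)]

lemma reducedBasis_mem_degreeLT (i : Fin (n + 1)) :
    reducedBasis hJ i ∈ degreeLT (Fin 2) R (n + 1) :=
  (span_reducedBasis hJ ▸ Submodule.subset_span ⟨i, rfl⟩ :
    reducedBasis hJ i ∈ degreeLT (Fin 2) R (n + 1) ⊓ J.restrictScalars R).1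

lemma finrank_degreeLT_succ_inf [Nontrivial R]
    (hJ : IsCompl (degreeLT (Fin 2) R n) (J.restrictScalars R)) :
    Module.finrank R ↥(degreeLT (Fin 2) R (n + 1) ⊓ J.restrictScalars R) = n + 1 := by
  rw [← span_reducedBasis hJ, finrank_span_eq_card (linearIndependent_reducedBasis hJ),
    Fintype.card_fin]

lemma exists_syzygy_coeff (i : Fin n) :
    ∃ c : Fin (n + 1) → R, ∑ j, c j • reducedBasis hJ j =
      X 1 * reducedBasis hJ i.succ - X 0 * reducedBasis hJ i.castSucc := by
  rw [← Submodule.mem_span_range_iff_exists_fun, span_reducedBasis]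
  have hX_mul (t : Fin 2) (j : Fin (n + 1)) :
      X t * (reducedBasis hJ j - binaryMonomial R n j) ∈ degreeLT (Fin 2) R (n + 1) := by
    rw [add_comm]
    exact restrictTotalDegree_mul_degreeLT_le 1 n (Submodule.mul_mem_mul
      (X_mem_restrictTotalDegree_one t) (reducedBasis_sub_binaryMonomial_mem hJ j))
  refine ⟨?_, J.sub_mem (J.mul_mem_left _ (reducedBasis_mem hJ _))
    (J.mul_mem_left _ (reducedBasis_mem hJ _))⟩
  have heq : X 1 * reducedBasis hJ i.succ - X 0 * reducedBasis hJ i.castSucc =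
      X 1 * (reducedBasis hJ i.succ - binaryMonomial R n i.succ) -
        X 0 * (reducedBasis hJ i.castSucc - binaryMonomial R n i.castSucc) := by
    linear_combination X_one_mul_binaryMonomial_succ R n i
  rw [heq]
  exact Submodule.sub_mem _ (hX_mul 1 i.succ) (hX_mul 0 i.castSucc)

end ReducedBasis

section BorderMatrix

open Matrix

lemma rank_map_fractionRing_eq_of_det_submatrix_ne_zero {R m n : Type*} [CommRing R] [IsDomain R]
    [Fintype m] [DecidableEq m] [Fintype n] (M : Matrix m n R) (f : m → n)
    (hdet : (M.submatrix id f).det ≠ 0) :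
    (M.map (algebraMap R (FractionRing R))).rank = Fintype.card m := by
  refine le_antisymm (rank_le_card_height _) ?_
  have hdet' : ((M.map (algebraMap R (FractionRing R))).submatrix id f).det ≠ 0 := by
    rw [submatrix_map, ← RingHom.mapMatrix_apply, ← RingHom.map_det]
    exact (map_ne_zero_iff _ (IsFractionRing.injective R (FractionRing R))).2 hdet
  exact (rank_of_det_ne_zero hdet').ge.trans (rank_submatrix_le _ id f)

variable {R : Type*} [CommRing R]

/-- The block matrix `[S, 0; l, k]` with a single last row and column. -/
def borderMatrix {m n : ℕ} (S : Matrix (Fin m) (Fin n) R) (l : Fin n → R) (k : R) :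
    Matrix (Fin (m + 1)) (Fin (n + 1)) R :=
  of (Fin.snoc (fun i ↦ Fin.snoc (S i) 0) (Fin.snoc l k) : Fin (m + 1) → Fin (n + 1) → R)

variable {m n : ℕ} (S : Matrix (Fin m) (Fin n) R) (l : Fin n → R) (k : R)

@[simp]
lemma borderMatrix_castSucc_castSucc (i : Fin m) (j : Fin n) :
    borderMatrix S l k i.castSucc j.castSucc = S i j := by simp [borderMatrix]

@[simp]
lemma borderMatrix_last_castSucc (j : Fin n) :
    borderMatrix S l k (Fin.last m) j.castSucc = l j := by simp [borderMatrix]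

lemma borderMatrix_apply_last (i : Fin (m + 1)) :
    borderMatrix S l k i (Fin.last n) = if i = Fin.last m then k else 0 := by
  cases i using Fin.lastCases <;> simp [borderMatrix, (Fin.castSucc_lt_last _).ne]

lemma borderMatrix_mulVec_snoc (h : Fin n → R) (w : R) :
    borderMatrix S l k *ᵥ Fin.snoc h w = Fin.snoc (S *ᵥ h) (l ⬝ᵥ h + k * w) := by
  ext i
  cases i using Fin.lastCases <;>
    simp [mulVec, dotProduct, Fin.sum_univ_castSucc, borderMatrix_apply_last,
      (Fin.castSucc_lt_last _).ne]

lemma det_borderMatrix {n : ℕ} (S : Matrix (Fin n) (Fin n) R) (l : Fin n → R) (k : R) :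
    (borderMatrix S l k).det = S.det * k := by
  have hminor : (borderMatrix S l k).submatrix Fin.castSucc Fin.castSucc = S := by ext; simp
  rw [det_succ_column _ (Fin.last n), Fin.sum_univ_castSucc]
  simp [borderMatrix_apply_last, (Fin.castSucc_lt_last _).ne, hminor, mul_comm]

lemma borderMatrix_submatrix_succAbove {n : ℕ} (S : Matrix (Fin n) (Fin (n + 1)) R)
    (l : Fin (n + 1) → R) (k : R) :
    (borderMatrix S l k).submatrix id (Fin.last n).castSucc.succAbove =
      borderMatrix (S.submatrix id Fin.castSucc) (l ∘ Fin.castSucc) k := by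
  ext i j
  cases i using Fin.lastCases <;> cases j using Fin.lastCases <;>
    simp [borderMatrix_apply_last]

end BorderMatrix

section SyzygyMatrix

open Matrix

variable {R : Type*} [CommRing R] {n : ℕ}

/-- The matrix of the relations `X 1 * g (i + 1) - X 0 * g i = ∑ j, c i j * g j`. -/
def monomialSyzygyMatrix (c : Matrix (Fin n) (Fin (n + 1)) R) :
    Matrix (Fin n) (Fin (n + 1)) (MvPolynomial (Fin 2) R) :=
  of fun i j ↦ Pi.single i.succ (X 1) j - Pi.single i.castSucc (X 0) j - C (c i j)

lemma monomialSyzygyMatrix_apply_mem (c : Matrix (Fin n) (Fin (n + 1)) R) (i : Fin n)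
    (j : Fin (n + 1)) : monomialSyzygyMatrix c i j ∈ restrictTotalDegree (Fin 2) R 1 := by
  have hX (t : Fin 2) (i : Fin (n + 1)) :
      (Pi.single i (X t) : Fin (n + 1) → MvPolynomial (Fin 2) R) j ∈
        restrictTotalDegree (Fin 2) R 1 := by
    rw [Pi.single_apply]
    split_ifs
    exacts [X_mem_restrictTotalDegree_one t, zero_mem _]
  have hC : C (c i j) ∈ restrictTotalDegree (Fin 2) R 1 := by simp [mem_restrictTotalDegree]
  exact Submodule.sub_mem _ (Submodule.sub_mem _ (hX 1 _) (hX 0 _)) hC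

lemma monomialSyzygyMatrix_mulVec {c : Matrix (Fin n) (Fin (n + 1)) R}
    {g : Fin (n + 1) → MvPolynomial (Fin 2) R}
    (hc : ∀ i : Fin n, ∑ j, c i j • g j = X 1 * g i.succ - X 0 * g i.castSucc) :
    monomialSyzygyMatrix c *ᵥ g = 0 := by
  ext1 i
  simp [mulVec, dotProduct, monomialSyzygyMatrix, sub_mul, Finset.sum_sub_distrib,
    ← smul_eq_C_mul, hc, Pi.single_apply]

lemma det_monomialSyzygyMatrix_submatrix_ne_zero [Nontrivial R]
    (c : Matrix (Fin n) (Fin (n + 1)) R) :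
    ((monomialSyzygyMatrix c).submatrix id Fin.castSucc).det ≠ 0 := by
  let ψ : MvPolynomial (Fin 2) R →+* Polynomial R :=
    (aeval ![Polynomial.X, (0 : Polynomial R)]).toRingHom
  have hψX (i j : Fin (n + 1)) (t : Fin 2) :
      ψ (Pi.single (M := fun _ ↦ MvPolynomial (Fin 2) R) i (X t) j) =
        if j = i then ![Polynomial.X, 0] t else 0 := by
    rw [Pi.single_apply, apply_ite ψ, map_zero]
    simp [ψ]
  have hψC (a : R) : ψ (C a) = Polynomial.C a := by simp [ψ, ← algebraMap_eq]
  have hmap : ψ.mapMatrix ((monomialSyzygyMatrix c).submatrix id Fin.castSucc) =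
      -charmatrix (-c.submatrix id Fin.castSucc) := by
    ext1 i j
    simp [monomialSyzygyMatrix, hψX, hψC, charmatrix_apply, diagonal_apply, eq_comm (a := i),
      sub_eq_add_neg, add_comm]
  intro hdet
  have hcharpoly := congrArg ψ hdet
  rw [RingHom.map_det, hmap, det_neg, map_zero] at hcharpoly
  apply (charpoly_monic (-c.submatrix id Fin.castSucc)).ne_zero
  simpa [charpoly] using hcharpoly

/-- The linear syzygy matrix of a basis `k • g, w`, where the rows of `c` express
`X 1 * g (i + 1) - X 0 * g i` through `g`, and `w = ∑ i, l i * g i`. -/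
def linearSyzygyMatrix (c : Matrix (Fin n) (Fin (n + 1)) R)
    (l : Fin (n + 1) → MvPolynomial (Fin 2) R) (k : MvPolynomial (Fin 2) R) :
    Matrix (Fin (n + 1)) (Fin (n + 2)) (MvPolynomial (Fin 2) R) :=
  borderMatrix (monomialSyzygyMatrix c) (-l) k

variable {c : Matrix (Fin n) (Fin (n + 1)) R} {g l : Fin (n + 1) → MvPolynomial (Fin 2) R}
  {k w : MvPolynomial (Fin 2) R}

lemma linearSyzygyMatrix_apply_mem (hl : ∀ i, l i ∈ restrictTotalDegree (Fin 2) R 1)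
    (hk : k ∈ restrictTotalDegree (Fin 2) R 1) (i : Fin (n + 1)) (j : Fin (n + 2)) :
    linearSyzygyMatrix c l k i j ∈ restrictTotalDegree (Fin 2) R 1 := by
  cases j using Fin.lastCases with
  | last =>
    rw [linearSyzygyMatrix, borderMatrix_apply_last]
    split_ifs
    exacts [hk, zero_mem _]
  | cast j =>
    cases i using Fin.lastCases with
    | last => simpa [linearSyzygyMatrix] using hl j
    | cast i => simpa [linearSyzygyMatrix] using monomialSyzygyMatrix_apply_mem c i j

lemma linearSyzygyMatrix_mulVec
    (hc : ∀ i : Fin n, ∑ j, c i j • g j = X 1 * g i.succ - X 0 * g i.castSucc)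
    (hw : ∑ i, l i * g i = w) :
    linearSyzygyMatrix c l k *ᵥ Fin.snoc (k • g) w = 0 := by
  have hlast : -l ⬝ᵥ k • g + k * w = 0 := by
    rw [dotProduct_smul, neg_dotProduct, dotProduct, hw, smul_eq_mul, mul_neg, neg_add_cancel]
  rw [linearSyzygyMatrix, borderMatrix_mulVec_snoc, mulVec_smul, monomialSyzygyMatrix_mulVec hc,
    smul_zero, hlast]
  ext1 i
  cases i using Fin.lastCases <;> simp

lemma rank_linearSyzygyMatrix [IsDomain R] (hk : k ≠ 0) :
    ((linearSyzygyMatrix c l k).map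
      (algebraMap _ (FractionRing (MvPolynomial (Fin 2) R)))).rank = n + 1 := by
  rw [rank_map_fractionRing_eq_of_det_submatrix_ne_zero _ (Fin.last n).castSucc.succAbove,
    Fintype.card_fin]
  rw [linearSyzygyMatrix, borderMatrix_submatrix_succAbove, det_borderMatrix]
  exact mul_ne_zero (det_monomialSyzygyMatrix_submatrix_ne_zero c) hk

end SyzygyMatrix

section LinearSyzygyBasis

open Matrix

variable {F : Type*} [Field F] {n : ℕ}

/-- `Π_{n+1} ∩ I` has a basis `h_0, …, h_{n+1}` with a linear syzygy matrix of rank `n + 1` whose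
last column is `k • e_{n+1}`. -/
def HasLinearSyzygyBasis (n : ℕ) (I : Ideal (MvPolynomial (Fin 2) F))
    (k : MvPolynomial (Fin 2) F) : Prop :=
  ∃ h : Fin (n + 2) → MvPolynomial (Fin 2) F,
    LinearIndependent F h ∧
    Submodule.span F (Set.range h) =
      restrictTotalDegree (Fin 2) F (n + 1) ⊓ I.restrictScalars F ∧
    ∃ M : Matrix (Fin (n + 1)) (Fin (n + 2)) (MvPolynomial (Fin 2) F),
      (∀ i j, M i j ∈ restrictTotalDegree (Fin 2) F 1) ∧ M *ᵥ h = 0 ∧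
      (M.map (algebraMap _ (FractionRing (MvPolynomial (Fin 2) F)))).rank = n + 1 ∧
      ∀ i, M i (Fin.last (n + 1)) = if i = Fin.last n then k else 0

theorem hasLinearSyzygyBasis_of_isCompl {I J : Ideal (MvPolynomial (Fin 2) F)}
    (hI : IsCompl (degreeLT (Fin 2) F (n + 1)) (I.restrictScalars F))
    (hJ : IsCompl (degreeLT (Fin 2) F n) (J.restrictScalars F)) (hIJ : I ≤ J)
    {k : MvPolynomial (Fin 2) F} (hk : k ≠ 0) (hkdeg : k ∈ restrictTotalDegree (Fin 2) F 1)
    (hkJ : ∀ q ∈ J, k * q ∈ I) : HasLinearSyzygyBasis n I k := by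
  set g := reducedBasis hJ
  have hkg : LinearIndependent F (k • g) :=
    (linearIndependent_reducedBasis hJ).map' (LinearMap.mulLeft F k)
      (LinearMap.ker_eq_bot.2 (mul_right_injective₀ hk))
  have hkg_mem (i : Fin (n + 1)) :
      (k • g) i ∈ degreeLT (Fin 2) F (n + 2) ⊓ I.restrictScalars F := by
    refine ⟨?_, hkJ _ (reducedBasis_mem hJ i)⟩
    rw [show n + 2 = 1 + (n + 1) by omega]
    exact restrictTotalDegree_mul_degreeLT_le 1 (n + 1)
      (Submodule.mul_mem_mul hkdeg (reducedBasis_mem_degreeLT hJ i))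
  obtain ⟨w, ⟨hwdeg, hwI⟩, hli, hspan⟩ :=
    exists_snoc_linearIndependent_span_eq hkg hkg_mem (finrank_degreeLT_succ_inf hI)
  obtain ⟨l, hl, hwl⟩ : ∃ l : Fin (n + 1) → MvPolynomial (Fin 2) F,
      (∀ i, l i ∈ restrictTotalDegree (Fin 2) F 1) ∧ ∑ i, l i * g i = w := by
    apply exists_sum_mul_eq_of_mem_mul_span
    rw [span_reducedBasis]
    exact degreeLT_add_two_inf_le hJ ⟨hwdeg, hIJ hwI⟩
  choose c hc using exists_syzygy_coeff hJ
  exact ⟨_, hli, hspan.trans (by rw [degreeLT_succ]), linearSyzygyMatrix c l k,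
    linearSyzygyMatrix_apply_mem hl hkdeg, linearSyzygyMatrix_mulVec hc hwl,
    rank_linearSyzygyMatrix hk, borderMatrix_apply_last _ _ _⟩

end LinearSyzygyBasis

theorem stmt17_general {F : Type*} [Field F] (n : ℕ) (Y : Finset (Fin 2 → F))
    (hY : IsPoised (restrictTotalDegree (Fin 2) F n) Y)
    (k : MvPolynomial (Fin 2) F) (hk : k.totalDegree = 1)
    (hmax : ((Y : Set (Fin 2 → F)) ∩ {x | eval x k = 0}).ncard = n + 1) :
    HasLinearSyzygyBasis n (vanishingIdeal F (Y : Set (Fin 2 → F))) k := by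
  classical
  have hk0 : k ≠ 0 := fun h ↦ by simp [h] at hk
  have hkdeg : k ∈ restrictTotalDegree (Fin 2) F 1 := (mem_restrictTotalDegree _ _ _).2 hk.le
  have hline : (Y.filter (eval · k = 0)).card = n + 1 := by
    rw [← hmax, ← Set.ncard_coe_finset, Finset.coe_filter]
    rfl
  rw [← degreeLT_succ] at hY
  have hZ : IsPoised (degreeLT (Fin 2) F n) (Y.filter (eval · k ≠ 0)) := by
    refine hY.filter_eval_ne_zero hk0 (fun q hq ↦ ?_) (by rw [finrank_degreeLT_succ, hline])
    rw [add_comm]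
    exact restrictTotalDegree_mul_degreeLT_le 1 n (Submodule.mul_mem_mul hkdeg hq)
  have hanti := vanishingIdeal_anti_mono (k := F) (Finset.coe_subset.2
    (Y.filter_subset (eval · k ≠ 0)))
  refine hasLinearSyzygyBasis_of_isCompl hY.isCompl_vanishingIdeal hZ.isCompl_vanishingIdeal
    hanti hk0 hkdeg fun q hq y hy ↦ ?_
  by_cases hky : eval y k = 0
  · rw [aeval_eq_eval]
    simp [hky]
  · rw [map_mul, hq y (by simpa [hky] using hy), mul_zero]

/-- If a `Π_n`-poised set `Y_n` contains a maximal line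
`K = V(k)`, then there is a vector-space basis `h_0, …, h_{n+1}` of
`Π_{n+1} ∩ I(Y_n)` admitting a rank-`(n+1)` linear syzygy matrix whose last
column equals `k(x)·e_{n+1}`. -/
theorem stmt17 (n : ℕ) (Y : Finset Pt) (hY : Poised n Y)
    (k : BPoly) (hk : k.totalDegree = 1)
    (hmax : ((Y : Set Pt) ∩ {x | eval x k = 0}).ncard = n + 1) :
    ∃ h : Fin (n + 2) → BPoly,
      (∀ i, h i ∈ PiLE (n + 1) ⊓ vSub (Y : Set Pt)) ∧
      LinearIndependent ℝ h ∧
      Submodule.span ℝ (Set.range h) = PiLE (n + 1) ⊓ vSub (Y : Set Pt) ∧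
      ∃ M : Matrix (Fin (n + 1)) (Fin (n + 2)) BPoly,
        IsLinSyz n h M ∧ ratRank M = n + 1 ∧
        ∀ i : Fin (n + 1),
          M i (Fin.last (n + 1)) = if i = Fin.last n then k else 0 := by
  obtain ⟨h, hli, hspan, M, hlin, hsyz, hrank, hlast⟩ := stmt17_general n Y hY k hk hmax
  exact ⟨h, fun i ↦ hspan.le (Submodule.subset_span ⟨i, rfl⟩), hli, hspan, M,
    ⟨hlin, congrFun hsyz⟩, hrank, hlast⟩
end
end
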